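/- arXiv:2206.08351 — 2 statements merged into one kernel-verified Lean document; each statement's English description precedes it below -/
import Mathlib

section
/- (Bhargava–Shankar–Wang) For each degree n ≥ 7 there exists a constant c > 0 such that for all sufficiently large real X, the number N_n(X) of degree-n subfields K ⊂ ℂ with D_K ≤ X satisfies N_n(X) ≥ c · X^{1/2 + 1/n}. -/
open NumberField
open scoped Classical

/-- The absolute value of the discriminant of a finite extension of `ℚ` realized as a
subfield of `ℂ` (junk value `0` if the extension is infinite). -/
noncomputable def absDiscC (K : IntermediateField ℚ ℂ) : ℕ :=
  if h : FiniteDimensional ℚ K then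
    haveI := h
    haveI : NumberField K := ⟨⟩
    (NumberField.discr K).natAbs
  else 0

/-!
Write the degree as `n = m + 1` and let `H` be large. The polynomials
`X ^ n + 2 X ^ (n - 1) + ∑ k < m, (6 + 36 b_k) X ^ k` with `0 ≤ b_k < H ^ (n - k)` are irreducible
(Eisenstein at `2`), and over `ℤ_3` each of them is a linear factor times an Eisenstein polynomial
of degree `n - 1`. If `α` is a root and `F` a subfield of `ℚ(α)`, the degree of `α` over `F` is
therefore `1`, `n - 1` or `n`; as it divides `n`, the field `ℚ(α)` has no proper intermediate field.
The conjugates of `α` are `O(H)`, so that `D_{ℚ(α)} = O(H ^ (n (n - 1)))`, and there are `H ^ e`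
polynomials, where `e = m (m + 3) / 2 = n (n - 1) (1 / 2 + 1 / n)`. It remains to see that a
positive proportion of the `H ^ e` roots generate different fields.

Cut Minkowski space into cells of side `H / T`. All the `α` have the same trace, so those which
generate a given field `K` meet only `O(T ^ m)` cells. Two of them in one cell differ by an
integer of trace zero with conjugates `O(H / T)`, which again generates `K`, since `K` has no proper
subfield other than `ℚ`. There are only `O((H / T) ^ e)` such integers in all fields `K` together,
whence `H ^ e ≤ (O((H / T) ^ e) + #fields) * O(T ^ m)`. As `e > m`, a large constant `T` makes the
first summand negligible.
-/

open Polynomial IntermediateField IsLocalRing Module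

section LocalFactorization

variable {R : Type*} [CommRing R] [IsDomain R]

theorem irreducible_of_map_mk_eq_X_pow {P : Ideal R} (hP : P.IsPrime) {f : R[X]} (hf : f.Monic)
    {n : ℕ} (hn : n ≠ 0) (hmap : f.map (Ideal.Quotient.mk P) = X ^ n) (h0 : f.coeff 0 ∉ P ^ 2) :
    Irreducible f := by
  have : Nontrivial (R ⧸ P) := Ideal.Quotient.nontrivial_iff.mpr hP.ne_top
  have hdeg : f.natDegree = n := by
    rw [← hf.natDegree_map (Ideal.Quotient.mk P), hmap, natDegree_X_pow]
  refine (hf.isEisensteinAt_of_mem_of_notMem hP.ne_top (fun {k} hk ↦ ?_) h0).irreducible hP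
    hf.isPrimitive (by omega)
  rw [← Ideal.Quotient.eq_zero_iff_mem, ← coeff_map, hmap, coeff_X_pow, if_neg (by omega)]

theorem exists_eq_X_sub_C_mul_irreducible [IsLocalRing R] [HenselianRing R (maximalIdeal R)]
    {f : R[X]} (hf : f.Monic) {m : ℕ} (hm : m ≠ 0) {a : R} (ha : IsUnit a)
    (hmap : f.map (Ideal.Quotient.mk (maximalIdeal R)) =
      X ^ m * (X - C (Ideal.Quotient.mk (maximalIdeal R) a)))
    (h0 : f.coeff 0 ∉ maximalIdeal R ^ 2) :
    ∃ (r : R) (h : R[X]), f = (X - C r) * h ∧ h.Monic ∧ Irreducible h := by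
  set π := Ideal.Quotient.mk (maximalIdeal R)
  have heval : f.eval a ∈ maximalIdeal R := by
    rw [← Ideal.Quotient.eq_zero_iff_mem, ← eval_map_apply, hmap]
    simp [π]
  have hderiv : IsUnit (π (f.derivative.eval a)) := by
    rw [← eval_map_apply, ← derivative_map, hmap]
    simpa using (ha.map π).pow m
  obtain ⟨r, hroot, hra⟩ := HenselianRing.is_henselian f hf a heval hderiv
  obtain ⟨h, rfl⟩ := dvd_iff_isRoot.mpr hroot
  have hh : h.Monic := (monic_X_sub_C r).of_mul_monic_left hf
  have hπr : π r = π a := Ideal.Quotient.eq.mpr hra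
  have hhmap : h.map π = X ^ m := by
    refine mul_left_cancel₀ (X_sub_C_ne_zero (π a)) ?_
    rw [← mul_comm (X ^ m), ← hmap, Polynomial.map_mul, Polynomial.map_sub, map_X, map_C, hπr]
  refine ⟨r, h, rfl, hh,
    irreducible_of_map_mk_eq_X_pow (maximalIdeal.isMaximal R).isPrime hh hm hhmap fun hmem ↦ h0 ?_⟩
  rw [mul_coeff_zero]
  exact Ideal.mul_mem_left _ _ hmem

end LocalFactorization

section Subfields

variable {k : Type*} [Field k]

theorem natDegree_of_dvd_X_sub_C_mul_irreducible {r : k} {h q : k[X]} (hh : Irreducible h)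
    (hq : q ∣ (X - C r) * h) :
    q.natDegree ≤ 1 ∨ q.natDegree = h.natDegree ∨ q.natDegree = h.natDegree + 1 := by
  by_cases hhq : h ∣ q
  · right
    obtain ⟨s, rfl⟩ := hhq
    have hs : s ∣ X - C r := (mul_dvd_mul_iff_left hh.ne_zero).mp (by rwa [mul_comm h (X - C r)])
    have hsdeg := natDegree_le_of_dvd hs (X_sub_C_ne_zero r)
    rw [natDegree_mul hh.ne_zero (ne_zero_of_dvd_ne_zero (X_sub_C_ne_zero r) hs)]
    rw [natDegree_X_sub_C] at hsdeg
    omega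
  · left
    have hcop : IsCoprime q h := ((hh.coprime_iff_not_dvd).mpr hhq).symm
    simpa using natDegree_le_of_dvd (hcop.dvd_of_dvd_mul_right hq) (X_sub_C_ne_zero r)

variable {L E : Type*} [Field L] [Algebra k L] [Field E] [Algebra k E]

theorem adjoin_simple_eq_top_of_coe {K : IntermediateField k L} {x : K} (hx : k⟮(x : L)⟯ = K) :
    k⟮x⟯ = ⊤ :=
  lift_injective K (by rw [lift_adjoin_simple, lift_top, hx])

theorem adjoin_coe_eq_of_isAtom [CharZero k] {K : IntermediateField k L} [FiniteDimensional k K]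
    (hK : IsAtom K) {y : K} (hy : y ≠ 0) (htr : Algebra.trace k K y = 0) : k⟮(y : L)⟯ = K := by
  refine (hK.le_iff.mp (adjoin_simple_le_iff.mpr y.2)).resolve_left fun hbot ↦ hy ?_
  obtain ⟨q, hq⟩ := mem_bot.mp (adjoin_simple_eq_bot_iff.mp hbot)
  obtain rfl : algebraMap k K q = y := Subtype.ext hq
  rw [Algebra.trace_algebraMap, nsmul_eq_mul, mul_eq_zero, Nat.cast_eq_zero] at htr
  rw [htr.resolve_left finrank_pos.ne', map_zero]

theorem finrank_mul_natDegree_minpoly {F : IntermediateField k L} {α : L} (hα : IsIntegral k α)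
    (hF : F ≤ k⟮α⟯) : finrank k F * (minpoly F α).natDegree = finrank k k⟮α⟯ := by
  rw [← adjoin.finrank (hα.tower_top (A := F)), ← extendScalars_adjoin hF]
  exact finrank_mul_finrank k F (extendScalars hF)

theorem natDegree_minpoly_of_map_eq_X_sub_C_mul_irreducible {α : L} (hα : IsIntegral k α) {r : E}
    {h : E[X]} (hh : Irreducible h) (hfac : (minpoly k α).map (algebraMap k E) = (X - C r) * h)
    {F : IntermediateField k L} (hF : F ≤ k⟮α⟯) :
    (minpoly F α).natDegree ≤ 1 ∨ (minpoly F α).natDegree = h.natDegree ∨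
      (minpoly F α).natDegree = h.natDegree + 1 := by
  have hroot : aeval r (minpoly k α) = 0 := by
    rw [← eval_map_algebraMap, hfac]
    simp
  -- The root `r` embeds `k⟮α⟯`, and so `F`, into `E`: the factor `minpoly F α` of `minpoly k α`
  -- can be compared with the factorization over `E`.
  let φ : k⟮α⟯ →ₐ[k] E := (algHomAdjoinIntegralEquiv k hα).symm
    ⟨r, mem_aroots.mpr ⟨minpoly.ne_zero hα, hroot⟩⟩
  let ψ : F →ₐ[k] E := φ.comp (inclusion hF)
  have hdvd : (minpoly F α).map (ψ : F →+* E) ∣ (X - C r) * h := by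
    have := Polynomial.map_dvd (ψ : F →+* E) (minpoly.dvd_map_of_isScalarTower k F α)
    rwa [Polynomial.map_map, ψ.comp_algebraMap, hfac] at this
  simpa [natDegree_map] using natDegree_of_dvd_X_sub_C_mul_irreducible hh hdvd

theorem isAtom_adjoin_of_minpoly_map_eq {α : L} (hα : IsIntegral k α) {r : E} {h : E[X]}
    (hh : Irreducible h) (hfac : (minpoly k α).map (algebraMap k E) = (X - C r) * h) :
    IsAtom k⟮α⟯ := by
  have hrank : finrank k k⟮α⟯ = h.natDegree + 1 := by
    rw [adjoin.finrank hα, ← natDegree_map (algebraMap k E), hfac,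
      natDegree_mul (X_sub_C_ne_zero r) hh.ne_zero, natDegree_X_sub_C, add_comm]
  have hpos : 0 < h.natDegree := hh.natDegree_pos
  have : FiniteDimensional k k⟮α⟯ := adjoin.finiteDimensional hα
  refine ⟨fun hbot ↦ by rw [hbot, IntermediateField.finrank_bot] at hrank; omega, fun F hF ↦ ?_⟩
  have hmul := (finrank_mul_natDegree_minpoly hα hF.le).trans hrank
  have hne : (minpoly F α).natDegree ≠ 1 := fun h1 ↦
    hF.ne (eq_of_le_of_finrank_eq hF.le (by rw [hrank, ← hmul, h1, mul_one]))
  have hpos' := minpoly.natDegree_pos (hα.tower_top (A := F))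
  rcases natDegree_minpoly_of_map_eq_X_sub_C_mul_irreducible hα hh hfac hF.le with hd | hd | hd
  · omega
  · have hdvd : h.natDegree ∣ h.natDegree + 1 := ⟨_, by rw [← hmul, hd, mul_comm]⟩
    have := Nat.dvd_one.mp ((Nat.dvd_add_right dvd_rfl).mp hdvd)
    omega
  · rw [← IntermediateField.finrank_eq_one_iff]
    exact (Nat.mul_eq_right (by omega)).mp (hd ▸ hmul)

end Subfields

section Discriminant

variable {K : Type*} [Field K] [NumberField K]

theorem discr_dvd_algebra_discr {ι : Type*} [Fintype ι] [DecidableEq ι]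
    (hι : Fintype.card ι = finrank ℚ K) (v : ι → 𝓞 K) : discr K ∣ Algebra.discr ℤ v := by
  have hcard : Fintype.card (Free.ChooseBasisIndex ℤ (𝓞 K)) = Fintype.card ι := by
    rw [hι, ← RingOfIntegers.rank, finrank_eq_card_chooseBasisIndex]
  let b := (RingOfIntegers.basis K).reindex (Fintype.equivOfCardEq hcard)
  rw [← discr_eq_discr K b, ← b.toMatrix_map_vecMul v, Algebra.discr_of_matrix_vecMul]
  exact Dvd.intro_left _ rfl

theorem algebra_discr_coe {ι : Type*} [Fintype ι] [DecidableEq ι] (v : ι → 𝓞 K) :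
    Algebra.discr ℚ (fun i ↦ (v i : K)) = Algebra.discr ℤ v := by
  rw [Algebra.discr_def, Algebra.discr_def, ← eq_intCast (Int.castRingHom ℚ), RingHom.map_det]
  congr 1
  ext i j
  simp [Algebra.traceMatrix_apply, Algebra.traceForm_apply, Algebra.coe_trace_int]

theorem abs_discr_le_abs_discr_powerBasis (pb : PowerBasis ℚ K) (hint : IsIntegral ℤ pb.gen) :
    |(discr K : ℝ)| ≤ |(Algebra.discr ℚ pb.basis : ℝ)| := by
  let v : Fin pb.dim → 𝓞 K := fun i ↦ ⟨pb.gen ^ (i : ℕ), hint.pow _⟩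
  have hv : Algebra.discr ℚ pb.basis = Algebra.discr ℤ v := by
    rw [← algebra_discr_coe, pb.coe_basis]
    rfl
  have hne : Algebra.discr ℤ v ≠ 0 := by
    have := Algebra.discr_not_zero_of_basis ℚ pb.basis
    rwa [hv, Int.cast_ne_zero] at this
  have hdvd : discr K ∣ Algebra.discr ℤ v :=
    discr_dvd_algebra_discr (by rw [Fintype.card_fin, pb.finrank]) v
  rw [hv]
  exact_mod_cast Int.le_of_dvd (abs_pos.mpr hne) ((abs_dvd_abs _ _).mpr hdvd)

theorem sum_card_Ioi_mul_two (n : ℕ) : (∑ i : Fin n, (Finset.Ioi i).card) * 2 = n * (n - 1) := by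
  simp only [Fin.card_Ioi]
  rw [Fin.sum_univ_eq_sum_range (fun i ↦ n - 1 - i), Finset.sum_range_reflect (fun i ↦ i),
    Finset.sum_range_id_mul_two]

theorem abs_discr_powerBasis_le (pb : PowerBasis ℚ K) {B : ℝ}
    (hB : ∀ σ : K →+* ℂ, ‖σ pb.gen‖ ≤ B) :
    |(Algebra.discr ℚ pb.basis : ℝ)| ≤ (2 * B) ^ (finrank ℚ K * (finrank ℚ K - 1)) := by
  let e : Fin pb.dim ≃ (K →ₐ[ℚ] ℂ) :=
    Fintype.equivOfCardEq (by rw [Fintype.card_fin, AlgHom.card, pb.finrank])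
  have hgen (i : Fin pb.dim) : ‖e i pb.gen‖ ≤ B := hB (e i : K →+* ℂ)
  have hsub (i j : Fin pb.dim) : ‖(e j pb.gen - e i pb.gen) ^ 2‖ ≤ (2 * B) ^ 2 := by
    rw [norm_pow]
    gcongr
    exact (norm_sub_le _ _).trans (by linarith [hgen i, hgen j])
  calc |(Algebra.discr ℚ pb.basis : ℝ)|
      = ‖algebraMap ℚ ℂ (Algebra.discr ℚ pb.basis)‖ := by simp
    _ = ∏ i, ∏ j ∈ Finset.Ioi i, ‖(e j pb.gen - e i pb.gen) ^ 2‖ := by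
      simp_rw [Algebra.discr_powerBasis_eq_prod ℚ ℂ pb e, norm_prod]
    _ ≤ ∏ i : Fin pb.dim, ((2 * B) ^ 2) ^ (Finset.Ioi i).card := by
      refine Finset.prod_le_prod (fun _ _ ↦ by positivity) fun i _ ↦ ?_
      rw [← Finset.prod_const]
      exact Finset.prod_le_prod (fun _ _ ↦ by positivity) fun j _ ↦ hsub i j
    _ = (2 * B) ^ (finrank ℚ K * (finrank ℚ K - 1)) := by
      rw [Finset.prod_pow_eq_pow_sum, ← pow_mul, mul_comm 2 (∑ _, _), sum_card_Ioi_mul_two,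
        pb.finrank]

theorem abs_discr_le_of_powerBasis (pb : PowerBasis ℚ K) (hint : IsIntegral ℤ pb.gen) {B : ℝ}
    (hB : ∀ σ : K →+* ℂ, ‖σ pb.gen‖ ≤ B) :
    |(discr K : ℝ)| ≤ (2 * B) ^ (finrank ℚ K * (finrank ℚ K - 1)) :=
  (abs_discr_le_abs_discr_powerBasis pb hint).trans (abs_discr_powerBasis_le pb hB)

end Discriminant

theorem absDiscC_eq (K : IntermediateField ℚ ℂ) [NumberField K] :
    absDiscC K = (discr K).natAbs := by
  rw [absDiscC, dif_pos NumberField.to_finiteDimensional]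

section BoundedIntegers

/-- The algebraic integers of degree `n` over `ℚ` whose trace is `-a` and all of whose conjugates
have absolute value at most `B`. The data are read off the minimal polynomial, whose `nextCoeff`
is minus the trace. -/
def boundedIntegers (n : ℕ) (a : ℤ) (B : ℝ) : Set ℂ :=
  {α | IsIntegral ℤ α ∧ (minpoly ℤ α).natDegree = n ∧ (minpoly ℤ α).nextCoeff = a ∧
    ∀ z : ℂ, aeval z (minpoly ℤ α) = 0 → ‖z‖ ≤ B}

section NumberField

variable {K : Type*} [Field K] [NumberField K] {x : K}

theorem forall_norm_embedding_le_iff (hx : IsIntegral ℤ x) {B : ℝ} :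
    (∀ σ : K →+* ℂ, ‖σ x‖ ≤ B) ↔ ∀ z : ℂ, aeval z (minpoly ℤ x) = 0 → ‖z‖ ≤ B := by
  have hroots (z : ℂ) : (∃ σ : K →+* ℂ, σ x = z) ↔ aeval z (minpoly ℤ x) = 0 := by
    rw [← Set.mem_range, Embeddings.range_eval_eq_rootSet_minpoly, mem_rootSet,
      minpoly.isIntegrallyClosed_eq_field_fractions' ℚ hx, aeval_map_algebraMap]
    exact and_iff_right ((minpoly.monic hx).map _).ne_zero
  simp_rw [← hroots, forall_exists_index, forall_apply_eq_imp_iff]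

theorem trace_eq_neg_nextCoeff_minpoly (hx : IsIntegral ℤ x) (hgen : ℚ⟮x⟯ = ⊤) :
    Algebra.trace ℚ K x = -(minpoly ℤ x).nextCoeff := by
  rw [trace_eq_finrank_mul_minpoly_nextCoeff, hgen, IntermediateField.finrank_top,
    minpoly.isIntegrallyClosed_eq_field_fractions' ℚ hx,
    nextCoeff_map (algebraMap ℤ ℚ).injective_int]
  simp

end NumberField

theorem natDegree_minpoly_int {α : ℂ} (hα : IsIntegral ℤ α) :
    (minpoly ℤ α).natDegree = finrank ℚ ℚ⟮α⟯ := by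
  rw [adjoin.finrank hα.tower_top, minpoly.isIntegrallyClosed_eq_field_fractions' ℚ hα,
    (minpoly.monic hα).natDegree_map]

theorem coe_mem_boundedIntegers_iff {K : IntermediateField ℚ ℂ} [NumberField K] {x : K}
    (hx : ℚ⟮(x : ℂ)⟯ = K) {n : ℕ} {a : ℤ} {B : ℝ} :
    (x : ℂ) ∈ boundedIntegers n a B ↔ IsIntegral ℤ x ∧ finrank ℚ K = n ∧
      Algebra.trace ℚ K x = -a ∧ ∀ σ : K →+* ℂ, ‖σ x‖ ≤ B := by
  have hgen : ℚ⟮x⟯ = ⊤ := adjoin_simple_eq_top_of_coe hx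
  have hinj : Function.Injective (algebraMap K ℂ) := (algebraMap K ℂ).injective
  have hmin : minpoly ℤ (x : ℂ) = minpoly ℤ x := minpoly.algebraMap_eq hinj x
  have hint : IsIntegral ℤ (x : ℂ) ↔ IsIntegral ℤ x := isIntegral_algebraMap_iff hinj
  rw [boundedIntegers, Set.mem_ofPred_eq, hint]
  refine and_congr_right fun hxint ↦ ?_
  rw [natDegree_minpoly_int (hint.mpr hxint), hx, hmin, trace_eq_neg_nextCoeff_minpoly hxint hgen,
    forall_norm_embedding_le_iff hxint, neg_inj, Int.cast_inj]

variable {n : ℕ} {a : ℤ} {B : ℝ} {α : ℂ}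

theorem numberField_adjoin (hα : IsIntegral ℤ α) : NumberField ℚ⟮α⟯ where
  to_charZero := inferInstance
  to_finiteDimensional := adjoin.finiteDimensional hα.tower_top

theorem finrank_adjoin_of_mem_boundedIntegers (hα : α ∈ boundedIntegers n a B) :
    finrank ℚ ℚ⟮α⟯ = n := by
  rw [← natDegree_minpoly_int hα.1, hα.2.1]

theorem absDiscC_adjoin_le (hα : α ∈ boundedIntegers n a B) :
    (absDiscC ℚ⟮α⟯ : ℝ) ≤ (2 * B) ^ (n * (n - 1)) := by
  have := numberField_adjoin hα.1
  have hgen : ℚ⟮(AdjoinSimple.gen ℚ α : ℂ)⟯ = ℚ⟮α⟯ := by rw [AdjoinSimple.coe_gen]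
  obtain ⟨hint, hrank, -, hB⟩ := (coe_mem_boundedIntegers_iff hgen).mp
    (by rwa [AdjoinSimple.coe_gen])
  let pb := adjoin.powerBasis (K := ℚ) hα.1.tower_top
  have hpb : pb.gen = AdjoinSimple.gen ℚ α := adjoin.powerBasis_gen _
  rw [absDiscC_eq, Nat.cast_natAbs, Int.cast_abs, ← hrank]
  exact abs_discr_le_of_powerBasis pb (hpb ▸ hint) (hpb ▸ hB)

end BoundedIntegers

section MonicOfCoeffs

variable {R : Type*} [Semiring R] {m : ℕ}

/-- The monic polynomial `X ^ (m + 1) + a * X ^ m + c (m - 1) * X ^ (m - 1) + ⋯ + c 0`. The second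
coefficient is kept apart from the others because the trace is fixed throughout. -/
noncomputable def monicOfCoeffs (a : R) (c : Fin m → R) : R[X] :=
  X ^ (m + 1) + (∑ k : Fin m, C (c k) * X ^ (k : ℕ) + C a * X ^ m)

theorem degree_sum_add_C_mul_X_pow_lt (a : R) (c : Fin m → R) :
    (∑ k : Fin m, C (c k) * X ^ (k : ℕ) + C a * X ^ m).degree < ((m + 1 : ℕ) : WithBot ℕ) := by
  simpa [Fin.sum_univ_castSucc] using degree_sum_fin_lt (Fin.snoc c a : Fin (m + 1) → R)

theorem monic_monicOfCoeffs (a : R) (c : Fin m → R) : (monicOfCoeffs a c).Monic :=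
  monic_X_pow_add (degree_sum_add_C_mul_X_pow_lt a c)

theorem natDegree_monicOfCoeffs [Nontrivial R] (a : R) (c : Fin m → R) :
    (monicOfCoeffs a c).natDegree = m + 1 :=
  natDegree_eq_of_degree_eq_some <| by
    rw [monicOfCoeffs, degree_add_eq_left_of_degree_lt, degree_X_pow]
    rw [degree_X_pow]
    exact degree_sum_add_C_mul_X_pow_lt a c

theorem coeff_monicOfCoeffs (a : R) (c : Fin m → R) (k : Fin m) :
    (monicOfCoeffs a c).coeff k = c k := by
  have hk := k.2
  simp [monicOfCoeffs, coeff_X_pow, Fin.val_inj, hk.ne, (hk.trans m.lt_succ_self).ne]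

theorem coeff_monicOfCoeffs_self (a : R) (c : Fin m → R) : (monicOfCoeffs a c).coeff m = a := by
  have hne (k : Fin m) : m ≠ k := k.2.ne'
  simp [monicOfCoeffs, coeff_X_pow, hne]

theorem nextCoeff_monicOfCoeffs [Nontrivial R] (a : R) (c : Fin m → R) :
    (monicOfCoeffs a c).nextCoeff = a := by
  rw [nextCoeff_of_natDegree_pos (by rw [natDegree_monicOfCoeffs]; omega), natDegree_monicOfCoeffs,
    Nat.add_sub_cancel, coeff_monicOfCoeffs_self]

theorem monicOfCoeffs_injective (a : R) :
    Function.Injective (monicOfCoeffs a : (Fin m → R) → R[X]) := fun c d h ↦ by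
  ext k
  rw [← coeff_monicOfCoeffs a c, h, coeff_monicOfCoeffs]

theorem monicOfCoeffs_nextCoeff_coeff {p : R[X]} (hp : p.Monic) (hdeg : p.natDegree = m + 1) :
    monicOfCoeffs p.nextCoeff (fun k : Fin m ↦ p.coeff k) = p := by
  rw [nextCoeff_of_natDegree_pos (by omega), hdeg, Nat.add_sub_cancel, monicOfCoeffs,
    Fin.sum_univ_eq_sum_range (fun k ↦ C (p.coeff k) * X ^ k), ← Finset.sum_range_succ, ← hdeg]
  exact hp.as_sum.symm

end MonicOfCoeffs

section CountingBoundedIntegers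

/-- The number of monic polynomials of degree `m + 1` with prescribed second coefficient and with
roots of size about `B` is of order `B ^ boxExponent m`, since the coefficient of `X ^ k` has
size about `B ^ (m + 1 - k)`. -/
def boxExponent (m : ℕ) : ℕ := ∑ k : Fin m, (m + 1 - k)

theorem two_mul_boxExponent (m : ℕ) : 2 * boxExponent m = m * (m + 3) := by
  rw [boxExponent, Fin.sum_univ_eq_sum_range (fun k ↦ m + 1 - k) m]
  induction m with
  | zero => rfl
  | succ m ih =>
    rw [Finset.sum_range_succ', mul_add, Nat.sub_zero]
    simp_rw [Nat.add_sub_add_right]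
    rw [ih]
    ring

theorem card_Icc_neg_floor_floor_le {y : ℝ} (hy : 1 ≤ y) :
    ((Finset.Icc (-⌊y⌋) ⌊y⌋).card : ℝ) ≤ 3 * y := by
  have hfloor : 0 ≤ ⌊y⌋ := Int.floor_nonneg.mpr (by linarith)
  have hcard : ((Finset.Icc (-⌊y⌋) ⌊y⌋).card : ℤ) = ⌊y⌋ + 1 + ⌊y⌋ := by
    rw [Int.card_Icc, sub_neg_eq_add, Int.toNat_of_nonneg (by omega)]
  have hcard' : ((Finset.Icc (-⌊y⌋) ⌊y⌋).card : ℝ) = ⌊y⌋ + 1 + ⌊y⌋ := by exact_mod_cast hcard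
  linarith [Int.floor_le y]

theorem abs_coeff_le_of_roots_le {p : ℤ[X]} (hp : p.Monic) {B : ℝ}
    (hB : ∀ z : ℂ, aeval z p = 0 → ‖z‖ ≤ B) (hB0 : 0 ≤ B) (k : ℕ) :
    |(p.coeff k : ℝ)| ≤ 2 ^ p.natDegree * B ^ (p.natDegree - k) := by
  have hcoeff := coeff_le_of_roots_le (f := algebraMap ℤ ℂ) k hp (IsAlgClosed.splits _)
    fun z hz ↦ hB z (by simpa only [IsRoot, eval_map_algebraMap] using (mem_roots'.mp hz).2)
  rw [coeff_map, eq_intCast, Complex.norm_intCast] at hcoeff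
  refine hcoeff.trans ?_
  rw [mul_comm]
  gcongr
  exact_mod_cast Nat.choose_le_two_pow _ _

/-- The integral coefficient vectors `c` with `|c k| ≤ 2 ^ (m + 1) * B ^ (m + 1 - k)`, where all
monic integral polynomials of degree `m + 1` with roots bounded by `B` are found. -/
noncomputable def coeffBox (m : ℕ) (B : ℝ) : Finset (Fin m → ℤ) :=
  Fintype.piFinset fun k ↦
    Finset.Icc (-⌊(2 : ℝ) ^ (m + 1) * B ^ (m + 1 - k)⌋) ⌊(2 : ℝ) ^ (m + 1) * B ^ (m + 1 - k)⌋

variable {m : ℕ} {B : ℝ}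

theorem card_coeffBox_le (hB : 1 ≤ B) :
    ((coeffBox m B).card : ℝ) ≤ (3 * 2 ^ (m + 1)) ^ m * B ^ boxExponent m := by
  calc ((coeffBox m B).card : ℝ)
      ≤ ∏ k : Fin m, 3 * ((2 : ℝ) ^ (m + 1) * B ^ (m + 1 - k)) := by
        rw [coeffBox, Fintype.card_piFinset, Nat.cast_prod]
        refine Finset.prod_le_prod (fun _ _ ↦ by positivity) fun k _ ↦
          card_Icc_neg_floor_floor_le ?_
        exact one_le_mul_of_one_le_of_one_le (one_le_pow₀ one_le_two) (one_le_pow₀ hB)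
    _ = (3 * 2 ^ (m + 1)) ^ m * B ^ boxExponent m := by
        simp_rw [← mul_assoc]
        rw [Finset.prod_mul_distrib, Finset.prod_const, Finset.card_univ, Fintype.card_fin,
          Finset.prod_pow_eq_pow_sum, boxExponent]

theorem coeff_mem_coeffBox {p : ℤ[X]} (hp : p.Monic) (hdeg : p.natDegree = m + 1)
    (hB : ∀ z : ℂ, aeval z p = 0 → ‖z‖ ≤ B) (hB0 : 0 ≤ B) :
    (fun k : Fin m ↦ p.coeff k) ∈ coeffBox m B := by
  refine Fintype.mem_piFinset.mpr fun k ↦ ?_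
  have hk := abs_le.mp (hdeg ▸ abs_coeff_le_of_roots_le hp hB hB0 k)
  rw [Finset.mem_Icc, neg_le]
  exact ⟨Int.le_floor.mpr (by push_cast; linarith), Int.le_floor.mpr hk.2⟩

theorem boundedIntegers_subset_biUnion_roots (a : ℤ) (hB0 : 0 ≤ B) :
    boundedIntegers (m + 1) a B ⊆ ((coeffBox m B).biUnion fun c ↦
      ((monicOfCoeffs a c).map (algebraMap ℤ ℂ)).roots.toFinset : Finset ℂ) := by
  rintro α ⟨hint, hdeg, hnext, hB⟩
  have hmonic := minpoly.monic hint
  refine Finset.mem_coe.mpr (Finset.mem_biUnion.mpr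
    ⟨_, coeff_mem_coeffBox hmonic hdeg hB hB0, ?_⟩)
  rw [← hnext, monicOfCoeffs_nextCoeff_coeff hmonic hdeg, Multiset.mem_toFinset,
    mem_roots (hmonic.map _).ne_zero, IsRoot, eval_map_algebraMap, minpoly.aeval]

theorem finite_boundedIntegers (m : ℕ) (a : ℤ) (hB0 : 0 ≤ B) :
    (boundedIntegers (m + 1) a B).Finite :=
  (Finset.finite_toSet _).subset (boundedIntegers_subset_biUnion_roots a hB0)

theorem ncard_boundedIntegers_le (m : ℕ) (a : ℤ) (hB : 1 ≤ B) :
    ((boundedIntegers (m + 1) a B).ncard : ℝ) ≤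
      (m + 1) * (3 * 2 ^ (m + 1)) ^ m * B ^ boxExponent m := by
  have hcard : (boundedIntegers (m + 1) a B).ncard ≤ (coeffBox m B).card * (m + 1) := by
    refine (Set.ncard_le_ncard (boundedIntegers_subset_biUnion_roots a (zero_le_one.trans hB))
      (Finset.finite_toSet _)).trans ?_
    rw [Set.ncard_coe_finset]
    refine Finset.card_biUnion_le_card_mul _ _ _ fun c _ ↦ ?_
    rw [← natDegree_monicOfCoeffs a c, ← (monic_monicOfCoeffs a c).natDegree_map (algebraMap ℤ ℂ)]
    exact (Multiset.toFinset_card_le _).trans (card_roots' _)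
  calc ((boundedIntegers (m + 1) a B).ncard : ℝ)
      ≤ (coeffBox m B).card * (m + 1) := by exact_mod_cast hcard
    _ ≤ (3 * 2 ^ (m + 1)) ^ m * B ^ boxExponent m * (m + 1) := by
        gcongr
        exact card_coeffBox_le hB
    _ = (m + 1) * (3 * 2 ^ (m + 1)) ^ m * B ^ boxExponent m := by ring

end CountingBoundedIntegers

section Cells

variable {K : Type*} [Field K]

/-- The numbers `realCoord σ x`, for `σ` running over the complex embeddings of `K`, are real
coordinates of `x` in Minkowski space which treat real and complex embeddings alike: at a pair of
conjugate embeddings they are `re + im` and `re - im`. -/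
noncomputable def realCoord (σ : K →+* ℂ) (x : K) : ℝ := (σ x).re + (σ x).im

theorem realCoord_sub (σ : K →+* ℂ) (x y : K) :
    realCoord σ (x - y) = realCoord σ x - realCoord σ y := by
  simp only [realCoord, map_sub, Complex.sub_re, Complex.sub_im]
  ring

theorem abs_realCoord_le (σ : K →+* ℂ) (x : K) : |realCoord σ x| ≤ 2 * ‖σ x‖ :=
  (abs_add_le _ _).trans
    (by linarith [Complex.abs_re_le_norm (σ x), Complex.abs_im_le_norm (σ x)])

theorem norm_embedding_le_of_abs_realCoord_le {x : K} {c : ℝ}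
    (hx : ∀ σ : K →+* ℂ, |realCoord σ x| ≤ c) (σ : K →+* ℂ) : ‖σ x‖ ≤ c := by
  have hconj := hx (ComplexEmbedding.conjugate σ)
  rw [realCoord, ComplexEmbedding.conjugate_coe_eq, Complex.conj_re, Complex.conj_im] at hconj
  have hc : 0 ≤ c := (abs_nonneg _).trans hconj
  have h1 := sq_le_sq' (abs_le.mp (hx σ)).1 (abs_le.mp (hx σ)).2
  have h2 := sq_le_sq' (abs_le.mp hconj).1 (abs_le.mp hconj).2
  rw [realCoord] at h1
  refine le_of_sq_le_sq ?_ hc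
  rw [Complex.sq_norm, Complex.normSq_apply]
  nlinarith

/-- The cell of side `L` containing `x` in Minkowski space. The coordinate at `σ₀` is left out
because the trace determines it. -/
noncomputable def cell (σ₀ : K →+* ℂ) (L : ℝ) (x : K) : {σ : K →+* ℂ // σ ≠ σ₀} → ℤ :=
  fun σ ↦ ⌊realCoord σ x / L⌋

theorem abs_realCoord_sub_le_of_cell_eq {σ₀ : K →+* ℂ} {L : ℝ} (hL : 0 < L) {x y : K}
    (hxy : cell σ₀ L x = cell σ₀ L y) {σ : K →+* ℂ} (hσ : σ ≠ σ₀) : |realCoord σ (x - y)| ≤ L := by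
  have hlt := Int.abs_sub_lt_one_of_floor_eq_floor (congrFun hxy ⟨σ, hσ⟩)
  rw [← sub_div, ← realCoord_sub, abs_div, abs_of_pos hL, div_lt_one hL] at hlt
  exact hlt.le

variable [NumberField K]

theorem sum_realCoord (x : K) : ∑ σ : K →+* ℂ, realCoord σ x = Algebra.trace ℚ K x := by
  have hsum : ∑ σ : K →+* ℂ, σ x = (Algebra.trace ℚ K x : ℂ) := by
    rw [← eq_ratCast (algebraMap ℚ ℂ), trace_eq_sum_embeddings ℂ]
    exact Fintype.sum_equiv (RingHom.equivRatAlgHom K ℂ) _ _ fun _ ↦ rfl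
  have hre := congrArg Complex.re hsum
  have him := congrArg Complex.im hsum
  rw [Complex.re_sum, Complex.ratCast_re] at hre
  rw [Complex.im_sum, Complex.ratCast_im] at him
  simp only [realCoord, Finset.sum_add_distrib, hre, him, add_zero]

theorem norm_embedding_le_of_trace_eq_zero {x : K} (hx : Algebra.trace ℚ K x = 0) {σ₀ : K →+* ℂ}
    {c : ℝ} (hc : 0 ≤ c) (hσ : ∀ σ ≠ σ₀, |realCoord σ x| ≤ c) (σ : K →+* ℂ) :
    ‖σ x‖ ≤ finrank ℚ K * c := by
  have hcard : (Finset.univ.erase σ₀).card ≤ finrank ℚ K := by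
    rw [← Embeddings.card K ℂ]
    exact Finset.card_le_univ _
  have hle : c ≤ finrank ℚ K * c :=
    le_mul_of_one_le_left hc (by exact_mod_cast Nat.one_le_iff_ne_zero.mpr finrank_pos.ne')
  refine norm_embedding_le_of_abs_realCoord_le (fun τ ↦ ?_) σ
  rcases eq_or_ne τ σ₀ with rfl | hτ
  · have hsum := sum_realCoord x
    rw [hx, ← Finset.add_sum_erase _ _ (Finset.mem_univ τ), Rat.cast_zero, add_eq_zero_iff_eq_neg]
      at hsum
    calc |realCoord τ x|
        ≤ ∑ σ ∈ Finset.univ.erase τ, |realCoord σ x| := by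
          rw [hsum, abs_neg]
          exact Finset.abs_sum_le_sum_abs _ _
      _ ≤ (Finset.univ.erase τ).card • c :=
          Finset.sum_le_card_nsmul _ _ _ fun σ h ↦ hσ σ (Finset.ne_of_mem_erase h)
      _ ≤ finrank ℚ K * c := by
          rw [nsmul_eq_mul]
          gcongr
  · exact (hσ τ hτ).trans hle

variable {A : Finset K} {L : ℝ} {M : ℕ}

theorem card_image_cell_le (σ₀ : K →+* ℂ) (hL : 0 < L)
    (hA : ∀ x ∈ A, ∀ σ : K →+* ℂ, ‖σ x‖ ≤ M * L) :
    (A.image (cell σ₀ L)).card ≤ (4 * M + 1) ^ (finrank ℚ K - 1) := by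
  have hsub : A.image (cell σ₀ L) ⊆ Fintype.piFinset fun _ ↦ Finset.Icc (-(2 * M : ℤ)) (2 * M) := by
    refine Finset.image_subset_iff.mpr fun x hx ↦ Fintype.mem_piFinset.mpr fun σ ↦ ?_
    have hcoord : |realCoord σ.1 x / L| ≤ 2 * M := by
      rw [abs_div, abs_of_pos hL, div_le_iff₀ hL]
      linarith [abs_realCoord_le σ.1 x, hA x hx σ]
    obtain ⟨hlow, hup⟩ := abs_le.mp hcoord
    rw [Finset.mem_Icc]
    exact ⟨Int.le_floor.mpr (by exact_mod_cast hlow),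
      Int.floor_le_iff.mpr (by push_cast; linarith)⟩
  refine (Finset.card_le_card hsub).trans_eq ?_
  rw [Fintype.card_piFinset, Finset.prod_const, Finset.card_univ, Int.card_Icc,
    Fintype.card_subtype_compl, Fintype.card_subtype_eq, Embeddings.card]
  congr 1
  omega

/-- The elements of the ring of integers of `K` with trace zero and all conjugates of absolute
value at most `B`. -/
def tracelessIntegers (K : Type*) [Field K] [NumberField K] (B : ℝ) : Set K :=
  {y | IsIntegral ℤ y ∧ Algebra.trace ℚ K y = 0 ∧ ∀ σ : K →+* ℂ, ‖σ y‖ ≤ B}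

theorem finite_tracelessIntegers (B : ℝ) : (tracelessIntegers K B).Finite :=
  (Embeddings.finite_of_norm_le K ℂ B).subset fun _ hy ↦ ⟨hy.1, hy.2.2⟩

theorem sub_mem_tracelessIntegers_of_cell_eq {x y : K} (hx : IsIntegral ℤ x) (hy : IsIntegral ℤ y)
    (htr : Algebra.trace ℚ K x = Algebra.trace ℚ K y) {σ₀ : K →+* ℂ} (hL : 0 < L)
    (hcell : cell σ₀ L x = cell σ₀ L y) : x - y ∈ tracelessIntegers K (finrank ℚ K * L) := by
  have htr0 : Algebra.trace ℚ K (x - y) = 0 := by rw [map_sub, htr, sub_self]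
  exact ⟨hx.sub hy, htr0, norm_embedding_le_of_trace_eq_zero htr0 hL.le fun _ hσ ↦
    abs_realCoord_sub_le_of_cell_eq hL hcell hσ⟩

theorem card_le_ncard_tracelessIntegers_mul (hL : 0 < L) {t : ℚ} (hint : ∀ x ∈ A, IsIntegral ℤ x)
    (htr : ∀ x ∈ A, Algebra.trace ℚ K x = t) (hA : ∀ x ∈ A, ∀ σ : K →+* ℂ, ‖σ x‖ ≤ M * L) :
    A.card ≤
      (tracelessIntegers K (finrank ℚ K * L)).ncard * (4 * M + 1) ^ (finrank ℚ K - 1) := by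
  obtain ⟨σ₀⟩ : Nonempty (K →+* ℂ) := inferInstance
  refine (Finset.card_le_mul_card_image (f := cell σ₀ L) A _ fun q hq ↦ ?_).trans
    (Nat.mul_le_mul_left _ (card_image_cell_le σ₀ hL hA))
  obtain ⟨y, hy, rfl⟩ := Finset.mem_image.mp hq
  rw [← Set.ncard_coe_finset]
  refine Set.ncard_le_ncard_of_injOn (· - y) (fun x hx ↦ ?_) sub_left_injective.injOn
    (finite_tracelessIntegers _)
  obtain ⟨hxA, hxy⟩ := Finset.mem_filter.mp (Finset.mem_coe.mp hx)
  exact sub_mem_tracelessIntegers_of_cell_eq (hint x hxA) (hint y hy)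
    ((htr x hxA).trans (htr y hy).symm) hL hxy

end Cells

section Fibres

variable {m M : ℕ} {a : ℤ} {L : ℝ} {A : Finset ℂ}

theorem ncard_tracelessIntegers_le {K : IntermediateField ℚ ℂ} [NumberField K] (hK : IsAtom K)
    (hrank : finrank ℚ K = m + 1) {B : ℝ} (hB : 0 ≤ B) :
    (tracelessIntegers K B).ncard ≤ {β ∈ boundedIntegers (m + 1) 0 B | ℚ⟮β⟯ = K}.ncard + 1 := by
  have hfin : {β ∈ boundedIntegers (m + 1) 0 B | ℚ⟮β⟯ = K}.Finite :=
    (finite_boundedIntegers m 0 hB).subset (Set.sep_subset _ _)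
  refine le_trans ?_ (Set.ncard_insert_le 0 _)
  refine Set.ncard_le_ncard_of_injOn ((↑) : K → ℂ) (fun y hy ↦ ?_) Subtype.val_injective.injOn
    (hfin.insert 0)
  rcases eq_or_ne y 0 with rfl | hy0
  · exact Set.mem_insert _ _
  · have hgen : ℚ⟮(y : ℂ)⟯ = K := adjoin_coe_eq_of_isAtom hK hy0 hy.2.1
    exact Set.mem_insert_of_mem _ ⟨(coe_mem_boundedIntegers_iff hgen).mpr
      ⟨hy.1, hrank, by simpa using hy.2.1, hy.2.2⟩, hgen⟩

theorem card_fibre_le {K : IntermediateField ℚ ℂ} (hK : IsAtom K) (hL : 0 < L)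
    (hA : ∀ α ∈ A, α ∈ boundedIntegers (m + 1) a (M * L)) (hgen : ∀ α ∈ A, ℚ⟮α⟯ = K) :
    A.card ≤ ({β ∈ boundedIntegers (m + 1) 0 ((m + 1) * L) | ℚ⟮β⟯ = K}.ncard + 1) *
      (4 * M + 1) ^ m := by
  rcases A.eq_empty_or_nonempty with rfl | ⟨α₀, hα₀⟩
  · simp
  have hrank : finrank ℚ K = m + 1 := by
    rw [← hgen α₀ hα₀, finrank_adjoin_of_mem_boundedIntegers (hA α₀ hα₀)]
  have hfin : FiniteDimensional ℚ K := Module.finite_of_finrank_pos (by omega)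
  have : NumberField K := ⟨⟩
  have hmem (α : ℂ) (hα : α ∈ A) : α ∈ K := hgen α hα ▸ mem_adjoin_simple_self ℚ α
  let A' : Finset K := A.subtype (· ∈ K)
  have hA' (x : K) (hx : x ∈ A') : IsIntegral ℤ x ∧ finrank ℚ K = m + 1 ∧
      Algebra.trace ℚ K x = -a ∧ ∀ σ : K →+* ℂ, ‖σ x‖ ≤ M * L := by
    have hxA := Finset.mem_subtype.mp hx
    exact (coe_mem_boundedIntegers_iff (hgen _ hxA)).mp (hA _ hxA)
  calc A.card = A'.card := by rw [Finset.card_subtype, Finset.filter_true_of_mem hmem]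
    _ ≤ (tracelessIntegers K (finrank ℚ K * L)).ncard * (4 * M + 1) ^ (finrank ℚ K - 1) :=
      card_le_ncard_tracelessIntegers_mul hL (fun x hx ↦ (hA' x hx).1)
        (fun x hx ↦ (hA' x hx).2.2.1) fun x hx ↦ (hA' x hx).2.2.2
    _ ≤ _ := by
      rw [hrank, Nat.add_sub_cancel, Nat.cast_succ]
      gcongr
      exact ncard_tracelessIntegers_le hK hrank (by positivity)

theorem card_le_ncard_add_card_fields_mul (hL : 0 < L)
    (hA : ∀ α ∈ A, α ∈ boundedIntegers (m + 1) a (M * L)) (hatom : ∀ α ∈ A, IsAtom ℚ⟮α⟯) :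
    A.card ≤ ((boundedIntegers (m + 1) 0 ((m + 1) * L)).ncard + (A.image fun α ↦ ℚ⟮α⟯).card) *
      (4 * M + 1) ^ m := by
  have hfin := finite_boundedIntegers m 0 (B := (m + 1) * L) (by positivity)
  set S : Finset ℂ := hfin.toFinset
  set 𝒦 := A.image fun α ↦ ℚ⟮α⟯
  have hfibre (K) (hK : K ∈ 𝒦) : {α ∈ A | ℚ⟮α⟯ = K}.card ≤
      ({β ∈ S | ℚ⟮β⟯ = K}.card + 1) * (4 * M + 1) ^ m := by
    obtain ⟨α₀, hα₀, rfl⟩ := Finset.mem_image.mp hK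
    rw [← Set.ncard_coe_finset (Finset.filter _ S), Finset.coe_filter]
    simp only [S, Set.Finite.mem_toFinset]
    exact card_fibre_le (hatom α₀ hα₀) hL (fun α hα ↦ hA α (Finset.mem_filter.mp hα).1)
      fun α hα ↦ (Finset.mem_filter.mp hα).2
  calc A.card
      = ∑ K ∈ 𝒦, {α ∈ A | ℚ⟮α⟯ = K}.card := Finset.card_eq_sum_card_image _ _
    _ ≤ ∑ K ∈ 𝒦, ({β ∈ S | ℚ⟮β⟯ = K}.card + 1) * (4 * M + 1) ^ m := Finset.sum_le_sum hfibre
    _ = ({β ∈ S | ℚ⟮β⟯ ∈ 𝒦}.card + 𝒦.card) * (4 * M + 1) ^ m := by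
      rw [← Finset.sum_mul, Finset.sum_add_distrib,
        Finset.sum_card_fiberwise_eq_card_filter S 𝒦 fun β ↦ ℚ⟮β⟯, Finset.card_eq_sum_ones 𝒦]
    _ ≤ _ := by
      rw [Set.ncard_eq_toFinset_card _ hfin]
      gcongr
      exact Finset.filter_subset _ _

end Fibres

section RootBound

variable {F : Type*} [NormedField F]

theorem norm_lt_of_monic_of_isRoot {p : F[X]} (hp : p.Monic) {A : ℝ} (hA : 0 ≤ A)
    (hc : ∀ k < p.natDegree, ‖p.coeff k‖ ≤ A) {z : F} (hz : p.IsRoot z) : ‖z‖ < A + 1 := by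
  have hbound : p.cauchyBound ≤ ⟨A, hA⟩ + 1 := by
    rw [cauchyBound, hp.leadingCoeff, nnnorm_one, div_one]
    exact add_le_add (Finset.sup_le fun k hk ↦ hc k (Finset.mem_range.mp hk)) le_rfl
  exact (hz.norm_lt_cauchyBound hp.ne_zero).trans_le hbound

theorem norm_lt_of_norm_coeff_le_mul_pow {p : F[X]} (hp : p.Monic) {s : F} (hs : s ≠ 0) {A : ℝ}
    (hA : 0 ≤ A) (hc : ∀ k < p.natDegree, ‖p.coeff k‖ ≤ A * ‖s‖ ^ (p.natDegree - k)) {z : F}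
    (hz : p.IsRoot z) : ‖z‖ < (A + 1) * ‖s‖ := by
  have hs' : 0 < ‖s‖ := norm_pos_iff.mpr hs
  have hroot : (p.scaleRoots s⁻¹).IsRoot (s⁻¹ * z) := scaleRoots_eval₂_eq_zero (RingHom.id F) hz
  have hlt := norm_lt_of_monic_of_isRoot ((monic_scaleRoots_iff _).mpr hp) hA (fun k hk ↦ ?_) hroot
  · rwa [norm_mul, norm_inv, inv_mul_lt_iff₀ hs', mul_comm] at hlt
  · rw [natDegree_scaleRoots] at hk
    rw [coeff_scaleRoots, norm_mul, norm_pow, norm_inv, inv_pow, ← div_eq_mul_inv,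
      div_le_iff₀ (pow_pos hs' _)]
    exact hc k hk

end RootBound

section Family

variable {m : ℕ}

/-- The monic polynomials `X ^ (m + 1) + 2 * X ^ m + ∑ k < m, (6 + 36 * b k) * X ^ k`. They are
Eisenstein at `2`, and congruent to `X ^ m * (X - 1)` modulo `3` with constant term not divisible
by `9`. -/
noncomputable def familyPoly (b : Fin m → ℕ) : ℤ[X] :=
  monicOfCoeffs 2 fun k ↦ 6 + 36 * (b k : ℤ)

theorem familyPoly_injective : Function.Injective (familyPoly : (Fin m → ℕ) → ℤ[X]) := by
  intro b c h
  ext k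
  have := congrFun (monicOfCoeffs_injective 2 h) k
  omega

theorem coeff_zero_familyPoly (hm : m ≠ 0) (b : Fin m → ℕ) :
    ∃ j : ℤ, (familyPoly b).coeff 0 = 6 + 36 * j :=
  ⟨_, coeff_monicOfCoeffs 2 _ ⟨0, Nat.pos_of_ne_zero hm⟩⟩

theorem map_familyPoly {S : Type*} [CommRing S] (φ : ℤ →+* S) (h6 : (6 : S) = 0) (b : Fin m → ℕ) :
    (familyPoly b).map φ = X ^ m * (X + 2) := by
  have hcoeff (k : Fin m) : φ (6 + 36 * (b k : ℤ)) = 0 := by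
    rw [map_add, map_mul, map_ofNat, map_ofNat]
    linear_combination (1 + 6 * φ (b k)) * h6
  simp only [familyPoly, monicOfCoeffs, Polynomial.map_add, Polynomial.map_pow, map_X,
    Polynomial.map_mul, Polynomial.map_sum, map_C, hcoeff, C_0, zero_mul, Finset.sum_const_zero,
    map_ofNat, Polynomial.map_ofNat]
  ring

theorem irreducible_familyPoly (hm : m ≠ 0) (b : Fin m → ℕ) : Irreducible (familyPoly b) := by
  have hprime : (Ideal.span {(2 : ℤ)}).IsPrime :=
    (Ideal.span_singleton_prime two_ne_zero).mpr Int.prime_two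
  have h2 : (2 : ℤ ⧸ Ideal.span {(2 : ℤ)}) = 0 :=
    Ideal.Quotient.eq_zero_iff_mem.mpr (Ideal.mem_span_singleton_self 2)
  refine irreducible_of_map_mk_eq_X_pow hprime (monic_monicOfCoeffs _ _) m.succ_ne_zero ?_ ?_
  · have h2X : (2 : (ℤ ⧸ Ideal.span {(2 : ℤ)})[X]) = 0 := by
      rw [← map_ofNat C 2, h2, C_0]
    rw [map_familyPoly _ (by linear_combination 3 * h2), h2X, add_zero, pow_succ]
  · obtain ⟨j, hj⟩ := coeff_zero_familyPoly hm b
    rw [hj, Ideal.span_singleton_pow, Ideal.mem_span_singleton]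
    omega

theorem exists_factorization_padicInt_familyPoly (hm : m ≠ 0) (b : Fin m → ℕ) :
    ∃ (r : ℤ_[3]) (h : ℤ_[3][X]), (familyPoly b).map (algebraMap ℤ ℤ_[3]) = (X - C r) * h ∧
      h.Monic ∧ Irreducible h := by
  set π := Ideal.Quotient.mk (maximalIdeal ℤ_[3])
  have h3 : (3 : ℤ_[3] ⧸ maximalIdeal ℤ_[3]) = 0 := by
    rw [← map_ofNat π 3, Ideal.Quotient.eq_zero_iff_mem, PadicInt.maximalIdeal_eq_span_p]
    exact Ideal.mem_span_singleton_self _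
  refine exists_eq_X_sub_C_mul_irreducible ((monic_monicOfCoeffs _ _).map _) hm isUnit_one ?_ ?_
  · have h3X : (3 : (ℤ_[3] ⧸ maximalIdeal ℤ_[3])[X]) = 0 := by
      rw [← map_ofNat C 3, h3, C_0]
    rw [Polynomial.map_map, map_familyPoly _ (by linear_combination 2 * h3), map_one, C_1]
    linear_combination X ^ m * h3X
  · obtain ⟨j, hj⟩ := coeff_zero_familyPoly hm b
    rw [coeff_map, hj, PadicInt.maximalIdeal_eq_span_p, Ideal.span_singleton_pow,
      Ideal.mem_span_singleton, eq_intCast, PadicInt.pow_p_dvd_int_iff]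
    omega

section Roots

variable {b : Fin m → ℕ} {α : ℂ}

theorem isIntegral_of_aeval_familyPoly_eq_zero (hα : aeval α (familyPoly b) = 0) : IsIntegral ℤ α :=
  ⟨familyPoly b, monic_monicOfCoeffs _ _, hα⟩

theorem minpoly_eq_familyPoly (hm : m ≠ 0) (hα : aeval α (familyPoly b) = 0) :
    minpoly ℤ α = familyPoly b := by
  have hint := isIntegral_of_aeval_familyPoly_eq_zero hα
  exact eq_of_monic_of_associated (minpoly.monic hint) (monic_monicOfCoeffs _ _)
    ((minpoly.irreducible hint).associated_of_dvd (irreducible_familyPoly hm b)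
      (minpoly.isIntegrallyClosed_dvd hint hα))

theorem isAtom_adjoin_of_aeval_familyPoly_eq_zero (hm : m ≠ 0) (hα : aeval α (familyPoly b) = 0) :
    IsAtom ℚ⟮α⟯ := by
  have hint := isIntegral_of_aeval_familyPoly_eq_zero hα
  obtain ⟨r, h, hfac, hmonic, hirr⟩ := exists_factorization_padicInt_familyPoly hm b
  have hirr' : Irreducible (h.map (algebraMap ℤ_[3] ℚ_[3])) :=
    (hmonic.irreducible_iff_irreducible_map_fraction_map).mp hirr
  refine isAtom_adjoin_of_minpoly_map_eq (r := algebraMap ℤ_[3] ℚ_[3] r) hint.tower_top hirr' ?_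
  have hcomp : (algebraMap ℚ ℚ_[3]).comp (algebraMap ℤ ℚ) =
      (algebraMap ℤ_[3] ℚ_[3]).comp (algebraMap ℤ ℤ_[3]) := RingHom.ext_int _ _
  rw [minpoly.isIntegrallyClosed_eq_field_fractions' ℚ hint, minpoly_eq_familyPoly hm hα,
    Polynomial.map_map, hcomp, ← Polynomial.map_map, hfac, Polynomial.map_mul, Polynomial.map_sub,
    map_X, map_C]

theorem norm_le_of_aeval_familyPoly_eq_zero {H : ℕ} (hH : H ≠ 0)
    (hb : ∀ k : Fin m, b k < H ^ (m + 1 - k)) (hα : aeval α (familyPoly b) = 0) :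
    ‖α‖ ≤ 43 * H := by
  have hmonic : (familyPoly b).Monic := monic_monicOfCoeffs _ _
  have hdeg : (familyPoly b).natDegree = m + 1 := natDegree_monicOfCoeffs _ _
  have hcoeff (k : ℕ) (hk : k < m + 1) :
      ‖((familyPoly b).map (algebraMap ℤ ℂ)).coeff k‖ ≤ 42 * ‖(H : ℂ)‖ ^ (m + 1 - k) := by
    have hone : (1 : ℝ) ≤ (H : ℝ) ^ (m + 1 - k) :=
      one_le_pow₀ (by exact_mod_cast Nat.one_le_iff_ne_zero.mpr hH)
    rw [coeff_map, eq_intCast, Complex.norm_intCast, Complex.norm_natCast]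
    rcases (Nat.lt_succ_iff.mp hk).lt_or_eq with hkm | rfl
    · have hbk : (b ⟨k, hkm⟩ : ℝ) ≤ (H : ℝ) ^ (m + 1 - k) := by exact_mod_cast (hb ⟨k, hkm⟩).le
      rw [familyPoly, coeff_monicOfCoeffs 2 _ ⟨k, hkm⟩, abs_of_nonneg (by positivity)]
      push_cast
      linarith
    · rw [familyPoly, coeff_monicOfCoeffs_self, Int.cast_ofNat, abs_two]
      linarith
  have hlt := norm_lt_of_norm_coeff_le_mul_pow (hmonic.map (algebraMap ℤ ℂ)) (A := 42)
    (Nat.cast_ne_zero.mpr hH) (by norm_num) (by rwa [hmonic.natDegree_map, hdeg])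
    (by rwa [IsRoot, eval_map_algebraMap])
  rw [Complex.norm_natCast] at hlt
  linarith

theorem mem_boundedIntegers_of_aeval_familyPoly_eq_zero (hm : m ≠ 0) {H : ℕ} (hH : H ≠ 0)
    (hb : ∀ k : Fin m, b k < H ^ (m + 1 - k)) (hα : aeval α (familyPoly b) = 0) :
    α ∈ boundedIntegers (m + 1) 2 (43 * H) := by
  refine ⟨isIntegral_of_aeval_familyPoly_eq_zero hα, ?_⟩
  rw [minpoly_eq_familyPoly hm hα]
  exact ⟨natDegree_monicOfCoeffs _ _, nextCoeff_monicOfCoeffs _ _,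
    fun z ↦ norm_le_of_aeval_familyPoly_eq_zero hH hb⟩

end Roots

theorem exists_finset_boundedIntegers_isAtom (hm : m ≠ 0) {H : ℕ} (hH : H ≠ 0) :
    ∃ A : Finset ℂ, A.card = H ^ boxExponent m ∧
      ∀ α ∈ A, α ∈ boundedIntegers (m + 1) 2 (43 * H) ∧ IsAtom ℚ⟮α⟯ := by
  have hroot (b : Fin m → ℕ) : ∃ α : ℂ, aeval α (familyPoly b) = 0 :=
    IsAlgClosed.exists_aeval_eq_zero_of_injective ℂ (algebraMap ℤ ℂ).injective_int _ <| by
      rw [degree_eq_natDegree (irreducible_familyPoly hm b).ne_zero, familyPoly,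
        natDegree_monicOfCoeffs]
      exact_mod_cast m.succ_ne_zero
  choose root hroot using hroot
  have hinj : Function.Injective root := fun b c hbc ↦ familyPoly_injective <| by
    rw [← minpoly_eq_familyPoly hm (hroot b), hbc, minpoly_eq_familyPoly hm (hroot c)]
  refine ⟨(Fintype.piFinset fun k : Fin m ↦ Finset.range (H ^ (m + 1 - k))).image root, ?_, ?_⟩
  · rw [Finset.card_image_of_injective _ hinj, Fintype.card_piFinset]
    simp_rw [Finset.card_range]
    rw [Finset.prod_pow_eq_pow_sum, boxExponent]
  · refine Finset.forall_mem_image.mpr fun b hb ↦ ⟨?_, ?_⟩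
    · exact mem_boundedIntegers_of_aeval_familyPoly_eq_zero hm hH
        (fun k ↦ Finset.mem_range.mp (Fintype.mem_piFinset.mp hb k)) (hroot b)
    · exact isAtom_adjoin_of_aeval_familyPoly_eq_zero hm (hroot b)

end Family

section CountingFields

variable {m : ℕ}

theorem exists_finset_fields (hm : m ≠ 0) {T H : ℕ} (hT : T ≠ 0) (hTH : T ≤ H) :
    ∃ 𝒦 : Finset (IntermediateField ℚ ℂ),
      (∀ K ∈ 𝒦, finrank ℚ K = m + 1 ∧ (absDiscC K : ℝ) ≤ (86 * H) ^ ((m + 1) * m)) ∧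
      (H : ℝ) ^ boxExponent m ≤ ((m + 1) * (3 * 2 ^ (m + 1)) ^ m *
        ((m + 1) * (H / T)) ^ boxExponent m + 𝒦.card) * (173 * T) ^ m := by
  have hT1 : (1 : ℝ) ≤ T := by exact_mod_cast Nat.one_le_iff_ne_zero.mpr hT
  have hTH' : (T : ℝ) ≤ H := by exact_mod_cast hTH
  obtain ⟨A, hcard, hA⟩ := exists_finset_boundedIntegers_isAtom hm (H := H) (by omega)
  have hscale : (43 * T : ℕ) * ((H : ℝ) / T) = 43 * H := by
    push_cast
    field_simp
  have hbound := card_le_ncard_add_card_fields_mul (M := 43 * T) (L := (H : ℝ) / T)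
    (div_pos (by linarith) (by linarith)) (fun α hα ↦ hscale ▸ (hA α hα).1) fun α hα ↦ (hA α hα).2
  have hone : (1 : ℝ) ≤ (m + 1) * (H / T) :=
    one_le_mul_of_one_le_of_one_le (by linarith [m.cast_nonneg (α := ℝ)])
      ((one_le_div (by linarith)).mpr hTH')
  refine ⟨A.image fun α ↦ ℚ⟮α⟯, Finset.forall_mem_image.mpr fun α hα ↦
    ⟨finrank_adjoin_of_mem_boundedIntegers (hA α hα).1, ?_⟩, ?_⟩
  · refine (absDiscC_adjoin_le (hA α hα).1).trans_eq ?_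
    rw [Nat.add_sub_cancel]
    ring
  · rw [hcard] at hbound
    calc (H : ℝ) ^ boxExponent m
        ≤ ((boundedIntegers (m + 1) 0 ((m + 1) * (H / T))).ncard +
            (A.image fun α ↦ ℚ⟮α⟯).card) * (4 * (43 * T) + 1) ^ m := by exact_mod_cast hbound
      _ ≤ _ := by
          gcongr
          · exact ncard_boundedIntegers_le m 0 hone
          · linarith

theorem exists_mul_pow_le_half_pow {D q : ℝ} (hD : 0 ≤ D) (hq : 0 ≤ q) {d e : ℕ} (hde : d < e) :
    ∃ T : ℕ, T ≠ 0 ∧ D * (q * T) ^ d ≤ T ^ e / 2 := by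
  obtain ⟨T, hT⟩ := exists_nat_ge (2 * (D * q ^ d) + 1)
  have hpos : 0 ≤ D * q ^ d := by positivity
  have hT1 : (1 : ℝ) ≤ T := by linarith
  refine ⟨T, by rintro rfl; norm_num at hT1, ?_⟩
  calc D * (q * T) ^ d = D * q ^ d * T ^ d := by rw [mul_pow]; ring
    _ ≤ T / 2 * T ^ d := by gcongr; linarith
    _ = T ^ (d + 1) / 2 := by ring
    _ ≤ T ^ e / 2 := by gcongr; exact hde

theorem exists_finset_fields_card_ge (hm : m ≠ 0) :
    ∃ c : ℝ, 0 < c ∧ ∃ H₀ : ℕ, ∀ H : ℕ, H₀ ≤ H → ∃ 𝒦 : Finset (IntermediateField ℚ ℂ),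
      (∀ K ∈ 𝒦, finrank ℚ K = m + 1 ∧ (absDiscC K : ℝ) ≤ (86 * H) ^ ((m + 1) * m)) ∧
      c * H ^ boxExponent m ≤ 𝒦.card := by
  have hexp : m < boxExponent m := by
    have := two_mul_boxExponent m
    have := Nat.one_le_iff_ne_zero.mpr hm
    nlinarith
  set D : ℝ := (m + 1) * (3 * 2 ^ (m + 1)) ^ m * (m + 1) ^ boxExponent m with hD
  obtain ⟨T, hT, hTD⟩ := exists_mul_pow_le_half_pow (D := D) (q := 173) (by positivity)
    (by norm_num) hexp
  have : (0 : ℝ) < T := by exact_mod_cast Nat.pos_of_ne_zero hT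
  refine ⟨1 / (2 * (173 * T) ^ m), by positivity, T, fun H hH ↦ ?_⟩
  obtain ⟨𝒦, h𝒦, hcard⟩ := exists_finset_fields hm hT hH
  refine ⟨𝒦, h𝒦, ?_⟩
  have hhalf : D * (H / T) ^ boxExponent m * (173 * T) ^ m ≤ (H : ℝ) ^ boxExponent m / 2 :=
    calc D * (H / T) ^ boxExponent m * (173 * T) ^ m
        = D * (173 * T) ^ m * (H / T) ^ boxExponent m := by ring
      _ ≤ T ^ boxExponent m / 2 * (H / T) ^ boxExponent m := by gcongr
      _ = (H : ℝ) ^ boxExponent m / 2 := by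
        rw [div_pow]
        field_simp
  rw [mul_pow (m + 1 : ℝ), ← mul_assoc, ← hD, add_mul] at hcard
  rw [one_div, inv_mul_le_iff₀ (by positivity)]
  linarith

end CountingFields

section PassageToX

/-- The number of degree-`n` subfields of `ℂ` with absolute discriminant at most `X`. -/
noncomputable def fieldCount (n : ℕ) (X : ℝ) : ℕ :=
  Nat.card {K : IntermediateField ℚ ℂ // finrank ℚ K = n ∧ (absDiscC K : ℝ) ≤ X}

variable {n : ℕ}

theorem finite_fields_absDiscC_le (hn : n ≠ 0) (X : ℝ) :
    {K : IntermediateField ℚ ℂ | finrank ℚ K = n ∧ (absDiscC K : ℝ) ≤ X}.Finite := by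
  refine ((finite_of_discr_bdd ℂ ⌊X⌋₊).image Subtype.val).subset ?_
  rintro K ⟨hrank, hdisc⟩
  have hfin : FiniteDimensional ℚ K := Module.finite_of_finrank_pos (by omega)
  have : NumberField K := ⟨⟩
  refine ⟨⟨K, hfin⟩, ?_, rfl⟩
  rw [Set.mem_ofPred_eq, Int.abs_eq_natAbs, ← absDiscC_eq]
  exact_mod_cast Nat.le_floor hdisc

theorem card_le_fieldCount (hn : n ≠ 0) {X : ℝ} {𝒦 : Finset (IntermediateField ℚ ℂ)}
    (h𝒦 : ∀ K ∈ 𝒦, finrank ℚ K = n ∧ (absDiscC K : ℝ) ≤ X) : 𝒦.card ≤ fieldCount n X := by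
  rw [← Set.ncard_coe_finset]
  exact Set.ncard_le_ncard h𝒦 (finite_fields_absDiscC_le hn X)

theorem fieldCount_mono (hn : n ≠ 0) : Monotone (fieldCount n) := fun _ Y hXY ↦
  Set.ncard_le_ncard (fun _ hK ↦ ⟨hK.1, hK.2.trans hXY⟩) (finite_fields_absDiscC_le hn Y)

theorem exists_mul_rpow_le_of_monotone {f : ℝ → ℝ} (hf : Monotone f) {A c : ℝ} (hA : 0 < A)
    (hc : 0 < c) {d e H₀ : ℕ} (hd : d ≠ 0)
    (hfH : ∀ H : ℕ, H₀ ≤ H → c * H ^ e ≤ f ((A * H) ^ d)) :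
    ∃ c' : ℝ, 0 < c' ∧ ∃ X₀ : ℝ, ∀ X : ℝ, X₀ ≤ X → c' * X ^ ((e : ℝ) / d) ≤ f X := by
  refine ⟨c / (2 * A) ^ e, by positivity, (A * (H₀ + 1)) ^ d, fun X hX ↦ ?_⟩
  have hX0 : 0 ≤ X := le_trans (by positivity) hX
  obtain ⟨Y, hY0, rfl⟩ : ∃ Y : ℝ, 0 ≤ Y ∧ Y ^ d = X :=
    ⟨X ^ (d⁻¹ : ℝ), by positivity, Real.rpow_inv_natCast_pow hX0 hd⟩
  have hY : H₀ + 1 ≤ Y / A := by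
    rw [le_div_iff₀' hA]
    exact le_of_pow_le_pow_left₀ hd hY0 hX
  set H := ⌊Y / A⌋₊
  have hH : H₀ + 1 ≤ H := Nat.le_floor (by exact_mod_cast hY)
  have hHle : A * H ≤ Y := (le_div_iff₀' hA).mp (Nat.floor_le (by positivity))
  have hHge : Y ≤ 2 * A * H := by
    have hlt := (div_lt_iff₀' hA).mp (Nat.lt_floor_add_one (Y / A))
    have hH1 : (1 : ℝ) ≤ H := by exact_mod_cast (by omega : 1 ≤ H)
    nlinarith
  have hpow : (Y ^ d) ^ ((e : ℝ) / d) = Y ^ e := by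
    rw [← Real.rpow_natCast, ← Real.rpow_mul hY0, mul_div_cancel₀ _ (Nat.cast_ne_zero.mpr hd),
      Real.rpow_natCast]
  calc c / (2 * A) ^ e * (Y ^ d) ^ ((e : ℝ) / d)
      ≤ c / (2 * A) ^ e * (2 * A * H) ^ e := by rw [hpow]; gcongr
    _ = c * H ^ e := by rw [mul_pow (2 * A)]; field_simp
    _ ≤ f ((A * H) ^ d) := hfH H (by omega)
    _ ≤ f (Y ^ d) := hf (by gcongr)

theorem boxExponent_div_eq {m : ℕ} (hm : m ≠ 0) :
    (boxExponent m : ℝ) / ((m + 1) * m : ℕ) = 1 / 2 + 1 / (m + 1 : ℕ) := by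
  have hexp : 2 * (boxExponent m : ℝ) = m * (m + 3) := by exact_mod_cast two_mul_boxExponent m
  have hm0 : (m : ℝ) ≠ 0 := Nat.cast_ne_zero.mpr hm
  push_cast
  field_simp
  linear_combination hexp

end PassageToX

theorem count_degree_n_fields_lower_general (n : ℕ) (hn : 2 ≤ n) :
    ∃ c : ℝ, 0 < c ∧ ∃ X₀ : ℝ, ∀ X : ℝ, X₀ ≤ X →
      c * X ^ ((1 : ℝ) / 2 + 1 / (n : ℝ)) ≤
        (Nat.card {K : IntermediateField ℚ ℂ //
          Module.finrank ℚ K = n ∧ (absDiscC K : ℝ) ≤ X} : ℝ) := by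
  obtain ⟨m, rfl⟩ : ∃ m, n = m + 1 := ⟨n - 1, by omega⟩
  have hm : m ≠ 0 := by omega
  obtain ⟨c, hc, H₀, hfields⟩ := exists_finset_fields_card_ge hm
  have hcount (H : ℕ) (hH : H₀ ≤ H) :
      c * H ^ boxExponent m ≤ fieldCount (m + 1) ((86 * H) ^ ((m + 1) * m)) := by
    obtain ⟨𝒦, h𝒦, hcard⟩ := hfields H hH
    exact hcard.trans (Nat.cast_le.mpr (card_le_fieldCount m.succ_ne_zero h𝒦))
  have hmono : Monotone fun X ↦ (fieldCount (m + 1) X : ℝ) :=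
    Nat.mono_cast.comp (fieldCount_mono m.succ_ne_zero)
  rw [← boxExponent_div_eq hm]
  exact exists_mul_rpow_le_of_monotone hmono (by norm_num) hc
    (mul_ne_zero m.succ_ne_zero hm) hcount

/-- **Bhargava–Shankar–Wang.** For each degree `n ≥ 7` there is a constant `c > 0` such
that for all sufficiently large real `X`, the number of degree-`n` subfields `K ⊂ ℂ`
with `D_K ≤ X` is at least `c · X^{1/2 + 1/n}`. -/
theorem count_degree_n_fields_lower (n : ℕ) (hn : 7 ≤ n) :
    ∃ c : ℝ, 0 < c ∧ ∃ X₀ : ℝ, ∀ X : ℝ, X₀ ≤ X →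
      c * X ^ ((1 : ℝ) / 2 + 1 / (n : ℝ)) ≤
        (Nat.card {K : IntermediateField ℚ ℂ //
          Module.finrank ℚ K = n ∧ (absDiscC K : ℝ) ≤ X} : ℝ) :=
  count_degree_n_fields_lower_general n (by omega)
end

section
/- Fix a degree n ≥ 2, a prime ℓ, and a real number Δ ≥ 0. Suppose that for every ε > 0 there exists a constant C such that for every integer D > 1 there are at most C · D^{Δ+ε} subfields M ⊂ ℂ with [M:ℚ] = nℓ and D_M = D. Then for every ε > 0 there exists a constant C' such that every number field K of degree n over ℚ satisfies |Cl_K[ℓ]| ≤ C' · D_K^{ℓΔ+ε}. -/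
open NumberField
open scoped Classical

/-- The order of the `ℓ`-torsion subgroup of the class group of a number field `K`. -/
noncomputable def clTor (K : Type*) [Field K] (ℓ : ℕ) : ℕ :=
  Nat.card {c : ClassGroup (𝓞 K) // c ^ ℓ = 1}

/-!
Attach to an `ℓ`-torsion ideal class `c ≠ 1`, with `I` in `c` and `I ^ ℓ = (u)`, the degree-`ℓ`
extension `K(x)` with `x ^ ℓ = u`. The multiples `b x` with `b ∈ I⁻¹` are integral roots of
polynomials `X ^ ℓ - s` and together generate the unit ideal. Each `ℓ (b x) ^ (ℓ - 1)` lies in the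
different of `K(x) / K`, so the different divides `ℓ` and `D_{K(x)} = ℓ ^ j D_K ^ ℓ` with
`j ≤ ℓ [K : ℚ]`. By hypothesis there are few such fields, and a field `L` arises from at most
`ℓ ^ ℓ` classes: the `ℓ`-th roots of unity `σ x / x`, with `σ` running over the `ℓ` embeddings of
`L` over `K`, determine `x` modulo `K ^ ×`, and `x` modulo `K ^ ×` determines `c`.
-/

open Polynomial IntermediateField
open scoped nonZeroDivisors

section FractionalIdeal

variable {R K : Type*} [CommRing R] [Field K] [Algebra R K] [IsFractionRing R K]
  {m : ℕ} {I : (FractionalIdeal R⁰ K)ˣ} {u : Kˣ}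

theorem exists_pow_eq_mul_of_mem (hu : toPrincipalIdeal R K u = I ^ m) {a : K}
    (ha : a ∈ (I : FractionalIdeal R⁰ K)) : ∃ r : R, a ^ m = algebraMap R K r * u := by
  have ha_pow : a ^ m ∈ (I : FractionalIdeal R⁰ K) ^ m := by
    rw [← FractionalIdeal.mem_coe, FractionalIdeal.coe_pow]
    exact Submodule.pow_mem_pow _ ha m
  rw [← Units.val_pow_eq_pow_val, ← hu, coe_toPrincipalIdeal,
    FractionalIdeal.mem_spanSingleton] at ha_pow
  obtain ⟨r, hr⟩ := ha_pow
  exact ⟨r, by rw [← hr, Algebra.smul_def]⟩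

theorem isIntegral_div_of_pow_eq {L : Type*} [Field L] [Algebra K L] [Algebra R L]
    [IsScalarTower R K L] (hm : m ≠ 0) (hu : toPrincipalIdeal R K u = I ^ m) {x : L}
    (hx : x ^ m = algebraMap K L u) {a : K} (ha : a ∈ (I : FractionalIdeal R⁰ K)) :
    IsIntegral R (algebraMap K L a / x) := by
  obtain ⟨r, hr⟩ := exists_pow_eq_mul_of_mem hu ha
  have h_pow : (algebraMap K L a / x) ^ m = algebraMap R L r := by
    rw [div_pow, hx, ← map_pow, hr, ← map_div₀, mul_div_cancel_right₀ _ u.ne_zero,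
      ← IsScalarTower.algebraMap_apply]
  exact .of_pow (Nat.pos_of_ne_zero hm) (h_pow ▸ isIntegral_algebraMap)

theorem fractionalIdeal_le_one_of_pow_eq_one [IsIntegrallyClosed R] (hm : m ≠ 0)
    (hI : I ^ m = 1) : (I : FractionalIdeal R⁰ K) ≤ 1 := by
  intro a ha
  have ha_int : IsIntegral R a := by
    simpa using isIntegral_div_of_pow_eq (L := K) (u := 1) (x := 1) hm (by simp [hI]) (by simp) ha
  exact (FractionalIdeal.mem_one_iff _).2 (IsIntegrallyClosed.isIntegral_iff.1 ha_int)

theorem fractionalIdeal_eq_one_of_pow_eq_one [IsIntegrallyClosed R] (hm : m ≠ 0)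
    (hI : I ^ m = 1) : I = 1 := by
  refine Units.ext (le_antisymm (fractionalIdeal_le_one_of_pow_eq_one hm hI) ?_)
  have hI_inv : ((I⁻¹ : (FractionalIdeal R⁰ K)ˣ) : FractionalIdeal R⁰ K) ≤ 1 :=
    fractionalIdeal_le_one_of_pow_eq_one hm (by rw [inv_pow, hI, inv_one])
  simpa using mul_le_mul_left hI_inv (I : FractionalIdeal R⁰ K)

variable [IsDomain R]

theorem classGroup_mk_surjective : Function.Surjective (ClassGroup.mk (R := R) K) :=
  fun c ↦ ClassGroup.induction K (fun I ↦ ⟨I, rfl⟩) c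

theorem classGroup_mk_eq_one_iff_exists :
    ClassGroup.mk K I = 1 ↔ ∃ u, toPrincipalIdeal R K u = I := by
  rw [← (ClassGroup.equiv K).injective.eq_iff, map_one, ClassGroup.equiv_mk]
  simp

end FractionalIdeal

section FieldTheory

variable {K L : Type*} [Field K] [Field L] [Algebra K L]

theorem mem_range_algebraMap_of_forall_algHom_eq {E : Type*} [Field E] [IsAlgClosed E]
    [Algebra K E] [Algebra.IsAlgebraic K L] {y : L} (hy : IsSeparable K y) {z : E}
    (h : ∀ σ : L →ₐ[K] E, σ y = z) : y ∈ (algebraMap K L).range := by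
  have h_roots : (minpoly K y).rootSet E ⊆ {z} := by
    rw [← Algebra.IsAlgebraic.range_eval_eq_rootSet_minpoly]
    rintro _ ⟨σ, rfl⟩
    exact h σ
  have h_deg : (minpoly K y).natDegree ≤ 1 := by
    rw [← card_rootSet_eq_natDegree hy (IsAlgClosed.splits ((minpoly K y).map (algebraMap K E))),
      ← Nat.card_eq_fintype_card, Nat.card_coe_set_eq, ← Set.ncard_singleton z]
    exact Set.ncard_le_ncard h_roots
  exact minpoly.natDegree_eq_one_iff.1 (h_deg.antisymm (minpoly.natDegree_pos hy.isIntegral))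

theorem card_le_pow_finrank_of_div_injective [FiniteDimensional K L] [Algebra.IsSeparable K L]
    {m : ℕ} (hm : m ≠ 0) {ι : Type*} (x : ι → L) (hx_ne : ∀ i, x i ≠ 0)
    (hx_pow : ∀ i, x i ^ m ∈ (algebraMap K L).range)
    (hx_inj : ∀ i j, x i / x j ∈ (algebraMap K L).range → i = j) :
    Nat.card ι ≤ m ^ Module.finrank K L := by
  let E := AlgebraicClosure L
  have : NeZero m := ⟨hm⟩
  have h_ne i : algebraMap L E (x i) ≠ 0 := by simpa using hx_ne i
  have h_root i (σ : L →ₐ[K] E) : (σ (x i) / algebraMap L E (x i)) ^ m = 1 := by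
    obtain ⟨a, ha⟩ := hx_pow i
    rw [div_pow, div_eq_one_iff_eq (pow_ne_zero m (h_ne i)), ← map_pow, ← map_pow, ← ha,
      σ.commutes, ← IsScalarTower.algebraMap_apply]
  let twist (i : ι) (σ : L →ₐ[K] E) : rootsOfUnity m E := rootsOfUnity.mkOfPowEq _ (h_root i σ)
  have twist_injective : Function.Injective twist := by
    intro i j hij
    refine hx_inj i j (mem_range_algebraMap_of_forall_algHom_eq
      (Algebra.IsSeparable.isSeparable K _) (z := algebraMap L E (x i / x j)) fun σ ↦ ?_)
    have h_eq : σ (x i) / algebraMap L E (x i) = σ (x j) / algebraMap L E (x j) := by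
      simpa [twist] using congrArg (fun ζ : rootsOfUnity m E ↦ ((ζ : Eˣ) : E)) (congrFun hij σ)
    rw [div_eq_div_iff (h_ne i) (h_ne j)] at h_eq
    rw [map_div₀, map_div₀, div_eq_div_iff (by simpa using hx_ne j) (h_ne j), h_eq, mul_comm]
  calc Nat.card ι ≤ Nat.card ((L →ₐ[K] E) → rootsOfUnity m E) :=
        Nat.card_le_card_of_injective twist twist_injective
    _ = Nat.card (rootsOfUnity m E) ^ Module.finrank K L := by
        rw [Nat.card_fun, AlgHom.natCard_of_splits K L E fun _ ↦ IsAlgClosed.splits _]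
    _ ≤ m ^ Module.finrank K L := by gcongr; exact card_rootsOfUnity _ _

theorem finrank_adjoin_simple_of_pow_eq {p : ℕ} (hp : p.Prime) {a : K} (ha : ∀ b, b ^ p ≠ a)
    {x : L} (hx : x ^ p = algebraMap K L a) : Module.finrank K K⟮x⟯ = p := by
  have h_monic : (X ^ p - C a).Monic := monic_X_pow_sub_C a hp.ne_zero
  have h_root : aeval x (X ^ p - C a) = 0 := by simp [hx]
  rw [adjoin.finrank ⟨_, h_monic, h_root⟩, ← minpoly.eq_of_irreducible_of_monic
    (X_pow_sub_C_irreducible_of_prime hp ha) h_root h_monic, natDegree_X_pow_sub_C]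

end FieldTheory

section TorsionRadical

variable {R : Type*} (K : Type*) {L : Type*} [CommRing R] [IsDomain R] [Field K] [Algebra R K]
  [IsFractionRing R K] [Field L] [Algebra K L]

/-- `x` is an *`m`-torsion radical* for the ideal class `c`: an `m`-th root, in an extension `L`
of `K`, of a generator of `I ^ m` for some fractional ideal `I` in the class `c`. The extension of
`K` generated by `x` is the one attached to `c`. -/
def IsTorsionRadical (m : ℕ) (c : ClassGroup R) (x : L) : Prop :=
  ∃ (I : (FractionalIdeal R⁰ K)ˣ) (u : Kˣ),
    ClassGroup.mk K I = c ∧ toPrincipalIdeal R K u = I ^ m ∧ x ^ m = algebraMap K L u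

theorem exists_isTorsionRadical [IsAlgClosed L] {m : ℕ} (hm : m ≠ 0) {c : ClassGroup R}
    (hc : c ^ m = 1) : ∃ x : L, IsTorsionRadical K m c x := by
  obtain ⟨I, rfl⟩ := classGroup_mk_surjective (K := K) c
  obtain ⟨u, hu⟩ := classGroup_mk_eq_one_iff_exists.1 (map_pow (ClassGroup.mk K) I m ▸ hc)
  obtain ⟨x, hx⟩ := IsAlgClosed.exists_pow_nat_eq (algebraMap K L u) (Nat.pos_of_ne_zero hm)
  exact ⟨x, I, u, rfl, hu, hx⟩

theorem isTorsionRadical_one (m : ℕ) : IsTorsionRadical K m (1 : ClassGroup R) (1 : L) :=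
  ⟨1, 1, by simp⟩

variable {K}

theorem isTorsionRadical_algebraMap_iff {E : Type*} [Field E] [Algebra K E] [Algebra L E]
    [IsScalarTower K L E] {m : ℕ} {c : ClassGroup R} {x : L} :
    IsTorsionRadical K m c (algebraMap L E x) ↔ IsTorsionRadical K m c x := by
  simp only [IsTorsionRadical, IsScalarTower.algebraMap_apply K L E, ← map_pow,
    (algebraMap L E).injective.eq_iff]

namespace IsTorsionRadical

variable {m : ℕ} {c c' : ClassGroup R} {x x' : L}

theorem ne_zero (hm : m ≠ 0) (h : IsTorsionRadical K m c x) : x ≠ 0 := by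
  obtain ⟨I, u, -, -, hx⟩ := h
  rintro rfl
  rw [zero_pow hm] at hx
  exact u.ne_zero ((map_eq_zero _).1 hx.symm)

theorem pow_mem_range (h : IsTorsionRadical K m c x) : x ^ m ∈ (algebraMap K L).range := by
  obtain ⟨I, u, -, -, hx⟩ := h
  exact ⟨u, hx.symm⟩

theorem eq_of_div_mem_range [IsIntegrallyClosed R] (hm : m ≠ 0) (h : IsTorsionRadical K m c x)
    (h' : IsTorsionRadical K m c' x') (hxx' : x / x' ∈ (algebraMap K L).range) : c = c' := by
  have hx'_ne := h'.ne_zero hm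
  have hx_ne := h.ne_zero hm
  obtain ⟨I, u, rfl, hu, hx⟩ := h
  obtain ⟨I', u', rfl, hu', hx'⟩ := h'
  obtain ⟨v, hv⟩ := hxx'
  have hv_ne : v ≠ 0 := by
    rintro rfl
    exact div_ne_zero hx_ne hx'_ne (by rw [← hv, map_zero])
  lift v to Kˣ using hv_ne.isUnit
  have hu_eq : u = u' * v ^ m := by
    ext
    apply (algebraMap K L).injective
    simp only [Units.val_mul, Units.val_pow_eq_pow_val, map_mul, map_pow, hv, ← hx, ← hx']
    rw [← mul_pow, mul_div_cancel₀ _ hx'_ne]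
  have hI_pow : (I / (I' * toPrincipalIdeal R K v)) ^ m = 1 := by
    rw [div_pow, mul_pow, ← hu, ← hu', ← map_pow, ← map_mul, hu_eq, div_self']
  rw [div_eq_one.1 (fractionalIdeal_eq_one_of_pow_eq_one hm hI_pow), map_mul,
    classGroup_mk_eq_one_iff_exists.2 ⟨v, rfl⟩, mul_one]

variable (R K L) in
theorem ncard_le [IsIntegrallyClosed R] [FiniteDimensional K L] [Algebra.IsSeparable K L]
    (hm : m ≠ 0) :
    {c : ClassGroup R | ∃ x : L, IsTorsionRadical K m c x}.ncard ≤ m ^ Module.finrank K L := by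
  choose x hx using fun c : {c : ClassGroup R | ∃ x : L, IsTorsionRadical K m c x} ↦ c.2
  exact card_le_pow_finrank_of_div_injective hm x (fun c ↦ (hx c).ne_zero hm)
    (fun c ↦ (hx c).pow_mem_range)
    fun c c' hcc' ↦ Subtype.ext ((hx c).eq_of_div_mem_range hm (hx c') hcc')

theorem finrank_adjoin_simple [IsIntegrallyClosed R] (hm : m.Prime)
    (h : IsTorsionRadical K m c x) (hc : c ≠ 1) : Module.finrank K K⟮x⟯ = m := by
  obtain ⟨I, u, hI, hu, hx⟩ := h
  refine finrank_adjoin_simple_of_pow_eq hm (fun b hb ↦ hc ?_) hx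
  have hb_radical : IsTorsionRadical K m c b := ⟨I, u, hI, hu, hb⟩
  exact hb_radical.eq_of_div_mem_range hm.ne_zero (isTorsionRadical_one K m) ⟨b, by simp⟩

end IsTorsionRadical

end TorsionRadical

section Different

variable {A K L B : Type*} [CommRing A] [Field K] [Algebra A K] [Field L] [Algebra K L]
  [CommRing B] [Algebra B L] {x : L}

variable (B) in
/-- The elements of `B` of the form `b * x` with `b ≠ 0` in the fractional ideal `J`. When
`x ^ m` generates `I ^ m` and `J = I⁻¹`, these are generators of `L = K(x)` which are integral over
`A` and together generate the unit ideal of `B`. -/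
def integralMultiples (J : FractionalIdeal A⁰ K) (x : L) : Set B :=
  {y | ∃ b ∈ J, b ≠ 0 ∧ algebraMap B L y = algebraMap K L b * x}

theorem adjoin_eq_top_of_mem_integralMultiples {J : FractionalIdeal A⁰ K}
    (hgen : Algebra.adjoin K {x} = ⊤) {y : B} (hy : y ∈ integralMultiples B J x) :
    Algebra.adjoin K {algebraMap B L y} = ⊤ := by
  obtain ⟨b, -, hb_ne, hyb⟩ := hy
  have hx_eq : x = b⁻¹ • algebraMap B L y := by
    rw [hyb, ← Algebra.smul_def, inv_smul_smul₀ hb_ne]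
  rw [eq_top_iff, ← hgen]
  refine Algebra.adjoin_le (Set.singleton_subset_iff.2 ?_)
  rw [hx_eq]
  exact Subalgebra.smul_mem _ (Algebra.self_mem_adjoin_singleton _ _) _

variable [IsFractionRing A K] [Algebra A L] [IsScalarTower A K L] [IsIntegralClosure B A L]
  {m : ℕ} {I : (FractionalIdeal A⁰ K)ˣ} {u : Kˣ}

theorem exists_mem_span_integralMultiples (hm : m ≠ 0) (hu : toPrincipalIdeal A K u = I ^ m)
    (hx : x ^ m = algebraMap K L u) {z : K}
    (hz : z ∈ (I * ↑I⁻¹ : FractionalIdeal A⁰ K)) :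
    ∃ w ∈ Ideal.span (integralMultiples B (↑I⁻¹ : FractionalIdeal A⁰ K) x),
      algebraMap B L w = algebraMap K L z := by
  have hx_ne : x ≠ 0 := by
    rintro rfl
    rw [zero_pow hm] at hx
    exact u.ne_zero ((map_eq_zero _).1 hx.symm)
  refine FractionalIdeal.mul_induction_on hz (fun a ha b hb ↦ ?_) ?_
  · obtain rfl | hb_ne := eq_or_ne b 0
    · exact ⟨0, zero_mem _, by simp⟩
    have ha_int : IsIntegral A (algebraMap K L a / x) := isIntegral_div_of_pow_eq hm hu hx ha
    have hb_int : IsIntegral A (algebraMap K L b / x⁻¹) :=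
      isIntegral_div_of_pow_eq hm (u := u⁻¹) (I := I⁻¹) (by rw [map_inv, hu, inv_pow])
        (by rw [inv_pow, hx, Units.val_inv_eq_inv_val, map_inv₀]) hb
    rw [div_inv_eq_mul] at hb_int
    obtain ⟨v, hv⟩ := IsIntegralClosure.isIntegral_iff (A := B).1 ha_int
    obtain ⟨y, hy⟩ := IsIntegralClosure.isIntegral_iff (A := B).1 hb_int
    refine ⟨v * y, Ideal.mul_mem_left _ v (Ideal.subset_span ⟨b, hb, hb_ne, hy⟩), ?_⟩
    rw [map_mul, map_mul, hv, hy]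
    field_simp
  · rintro a b ⟨v, hv, hva⟩ ⟨w, hw, hwb⟩
    exact ⟨v + w, add_mem hv hw, by rw [map_add, map_add, hva, hwb]⟩

theorem span_integralMultiples_eq_top (hm : m ≠ 0) (hu : toPrincipalIdeal A K u = I ^ m)
    (hx : x ^ m = algebraMap K L u) :
    Ideal.span (integralMultiples B (↑I⁻¹ : FractionalIdeal A⁰ K) x) = ⊤ := by
  obtain ⟨w, hw_mem, hw⟩ := exists_mem_span_integralMultiples (B := B) hm hu hx (z := 1)
    (by rw [Units.mul_inv]; exact FractionalIdeal.one_mem_one _)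
  have hw_one : w = 1 := by
    apply IsIntegralClosure.algebraMap_injective B A L
    rw [hw, map_one, map_one]
  exact (Ideal.eq_top_iff_one _).2 (hw_one ▸ hw_mem)

variable [Algebra A B] [IsScalarTower A B L]

theorem pow_mem_range_of_mem_integralMultiples (hu : toPrincipalIdeal A K u = I ^ m)
    (hx : x ^ m = algebraMap K L u) {y : B}
    (hy : y ∈ integralMultiples B (↑I⁻¹ : FractionalIdeal A⁰ K) x) :
    y ^ m ∈ (algebraMap A B).range := by
  obtain ⟨b, hb, -, hyb⟩ := hy
  obtain ⟨r, hr⟩ := exists_pow_eq_mul_of_mem (u := u⁻¹) (I := I⁻¹) (m := m)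
    (by rw [map_inv, hu, inv_pow]) hb
  refine ⟨r, IsIntegralClosure.algebraMap_injective B A L ?_⟩
  rw [map_pow, hyb, mul_pow, hx, ← map_pow, hr, ← map_mul, mul_assoc, Units.inv_mul, mul_one,
    ← IsScalarTower.algebraMap_apply, ← IsScalarTower.algebraMap_apply]

variable [IsDomain A] [IsIntegrallyClosed A] [IsDedekindDomain B] [Module.IsTorsionFree A B]
  [FiniteDimensional K L] [Algebra.IsSeparable K L]

variable (K L) in
theorem aeval_derivative_mem_differentIdeal_of_aeval_eq_zero {f : A[X]} {y : B}
    (hf : aeval y f = 0) (hgen : Algebra.adjoin K {algebraMap B L y} = ⊤) :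
    aeval y (derivative f) ∈ differentIdeal A B := by
  have hy_int : IsIntegral A y := IsIntegralClosure.isIntegral A L y
  obtain ⟨g, rfl⟩ := minpoly.isIntegrallyClosed_dvd hy_int hf
  have h_deriv : aeval y (derivative (minpoly A y * g)) =
      aeval y g * aeval y (derivative (minpoly A y)) := by
    simp [derivative_mul, mul_comm]
  rw [h_deriv]
  exact Ideal.mul_mem_left _ _ (aeval_derivative_mem_differentIdeal A K L y hgen)

theorem IsTorsionRadical.natCast_mem_differentIdeal {c : ClassGroup A} (hm : m ≠ 0)
    (h : IsTorsionRadical K m c x) (hgen : Algebra.adjoin K {x} = ⊤) :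
    (m : B) ∈ differentIdeal A B := by
  obtain ⟨I, u, -, hu, hx⟩ := h
  set S := integralMultiples B (↑I⁻¹ : FractionalIdeal A⁰ K) x
  have h_deriv : ∀ y ∈ S, m * y ^ (m - 1) ∈ differentIdeal A B := by
    intro y hy
    obtain ⟨s, hs⟩ := pow_mem_range_of_mem_integralMultiples hu hx hy
    have h_eq : aeval y (derivative (X ^ m - C s : A[X])) = m * y ^ (m - 1) := by
      simp [derivative_X_pow]
    rw [← h_eq]
    exact aeval_derivative_mem_differentIdeal_of_aeval_eq_zero K L (by simp [hs])
      (adjoin_eq_top_of_mem_integralMultiples hgen hy)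
  have h_span : Ideal.span ((· ^ (m - 1)) '' S) = ⊤ :=
    Ideal.span_pow_eq_top S (span_integralMultiples_eq_top hm hu hx) (m - 1)
  have h_le : Ideal.span ((· ^ (m - 1)) '' S) ≤
      Submodule.comap (LinearMap.mulLeft B (m : B)) (differentIdeal A B) :=
    Ideal.span_le.2 (Set.image_subset_iff.2 h_deriv)
  simpa using h_le (h_span ▸ Submodule.mem_top : (1 : B) ∈ _)

end Different

section NumberField

theorem exists_natAbs_discr_eq_pow_mul {K L : Type*} [Field K] [NumberField K] [Field L]
    [NumberField L] [Algebra K L] {p : ℕ} (hp : p.Prime)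
    (h : (p : 𝓞 L) ∈ differentIdeal (𝓞 K) (𝓞 L)) :
    ∃ j ≤ Module.finrank ℚ L,
      (discr L).natAbs = p ^ j * (discr K).natAbs ^ Module.finrank K L := by
  have h_dvd : Ideal.absNorm (differentIdeal (𝓞 K) (𝓞 L)) ∣ p ^ Module.finrank ℚ L := by
    rw [← RingOfIntegers.rank L, ← Ideal.absNorm_span_natCast]
    exact Ideal.absNorm_dvd_absNorm_of_le ((Ideal.span_singleton_le_iff_mem _).2 h)
  obtain ⟨j, hj, hj_eq⟩ := (Nat.dvd_prime_pow hp).1 h_dvd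
  exact ⟨j, hj, by
    rw [natAbs_discr_eq_absNorm_differentIdeal_mul_natAbs_discr_pow K (𝓞 K) L (𝓞 L), hj_eq]⟩

theorem absDiscC_eq_natAbs_discr (M : IntermediateField ℚ ℂ) [NumberField M] :
    absDiscC M = (discr M).natAbs :=
  dif_pos NumberField.to_finiteDimensional

/-- The subfields of `ℂ` of degree `d` over `ℚ` whose discriminant has absolute value `D`. -/
def fieldsOfDegreeDiscr (d D : ℕ) : Set (IntermediateField ℚ ℂ) :=
  {M | Module.finrank ℚ M = d ∧ absDiscC M = D}

theorem finite_fieldsOfDegreeDiscr {d : ℕ} (hd : d ≠ 0) (D : ℕ) :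
    (fieldsOfDegreeDiscr d D).Finite := by
  refine ((finite_of_discr_bdd ℂ D).image Subtype.val).subset ?_
  rintro M ⟨hM_deg, hM_discr⟩
  have hM_fin : FiniteDimensional ℚ M := .of_finrank_pos (by lia)
  have : NumberField M := ⟨⟩
  rw [absDiscC_eq_natAbs_discr] at hM_discr
  exact ⟨⟨M, hM_fin⟩, by rw [Set.mem_ofPred_eq, Int.abs_eq_natAbs, hM_discr], rfl⟩

variable (K : Type*) [Field K] [NumberField K] [Algebra K ℂ] {ℓ : ℕ}

/-- The extensions of `K` inside `ℂ` of degree `ℓ [K : ℚ]` over `ℚ` whose discriminant is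
`D_K ^ ℓ` times a power of `ℓ` with exponent at most `ℓ [K : ℚ]`. The extensions attached to
nontrivial `ℓ`-torsion classes are among them. -/
def radicalExtensionCandidates (ℓ : ℕ) : Set (IntermediateField K ℂ) :=
  restrictScalars ℚ ⁻¹' ⋃ j ∈ Finset.range (Module.finrank ℚ K * ℓ + 1),
    fieldsOfDegreeDiscr (Module.finrank ℚ K * ℓ) (ℓ ^ j * (discr K).natAbs ^ ℓ)

variable {K}

theorem finrank_of_mem_radicalExtensionCandidates {L : IntermediateField K ℂ}
    (hL : L ∈ radicalExtensionCandidates K ℓ) : Module.finrank K L = ℓ := by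
  obtain ⟨_, -, hL_deg, -⟩ := Set.mem_iUnion₂.1 hL
  have h_tower : Module.finrank ℚ K * Module.finrank K L = Module.finrank ℚ K * ℓ :=
    (Module.finrank_mul_finrank ℚ K L).trans hL_deg
  exact Nat.eq_of_mul_eq_mul_left Module.finrank_pos h_tower

theorem IsTorsionRadical.adjoin_mem_radicalExtensionCandidates (hℓ : ℓ.Prime)
    {c : ClassGroup (𝓞 K)} (hc : c ≠ 1) {x : ℂ} (hx : IsTorsionRadical K ℓ c x) :
    K⟮x⟯ ∈ radicalExtensionCandidates K ℓ := by
  have h_deg : Module.finrank K K⟮x⟯ = ℓ := hx.finrank_adjoin_simple hℓ hc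
  have : FiniteDimensional K K⟮x⟯ := .of_finrank_pos (h_deg ▸ hℓ.pos)
  have : FiniteDimensional ℚ K⟮x⟯ := Module.Finite.trans K _
  have : NumberField K⟮x⟯ := ⟨⟩
  have : NumberField (K⟮x⟯.restrictScalars ℚ) := ‹NumberField K⟮x⟯›
  have h_degQ : Module.finrank ℚ K⟮x⟯ = Module.finrank ℚ K * ℓ := by
    rw [← Module.finrank_mul_finrank ℚ K K⟮x⟯, h_deg]
  have h_gen_radical : IsTorsionRadical K ℓ c (AdjoinSimple.gen K x) :=
    isTorsionRadical_algebraMap_iff.1 hx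
  have h_gen_top : Algebra.adjoin K {AdjoinSimple.gen K x} = ⊤ :=
    (adjoin.powerBasis ((AdjoinSimple.isIntegral_gen K x).1 (.of_finite K _))).adjoin_gen_eq_top
  obtain ⟨j, hj, h_discr⟩ := exists_natAbs_discr_eq_pow_mul hℓ
    (h_gen_radical.natCast_mem_differentIdeal (B := 𝓞 K⟮x⟯) hℓ.ne_zero h_gen_top)
  rw [h_deg] at h_discr
  refine Set.mem_biUnion (Finset.mem_range.2 (by lia : j < _)) ⟨h_degQ, ?_⟩
  rw [absDiscC_eq_natAbs_discr, ← h_discr]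
  rfl

theorem finite_radicalExtensionCandidates (hℓ : ℓ ≠ 0) :
    (radicalExtensionCandidates K ℓ).Finite :=
  ((Finset.finite_toSet _).biUnion fun _ _ ↦ finite_fieldsOfDegreeDiscr
    (mul_ne_zero Module.finrank_pos.ne' hℓ) _).preimage (restrictScalars_injective ℚ).injOn

theorem ncard_radicalExtensionCandidates_le (hℓ : ℓ ≠ 0) :
    (radicalExtensionCandidates K ℓ).ncard ≤ ∑ j ∈ Finset.range (Module.finrank ℚ K * ℓ + 1),
      (fieldsOfDegreeDiscr (Module.finrank ℚ K * ℓ) (ℓ ^ j * (discr K).natAbs ^ ℓ)).ncard := by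
  refine (Set.ncard_le_ncard_of_injOn (s := radicalExtensionCandidates K ℓ) (restrictScalars ℚ)
    (fun _ hL ↦ hL) (restrictScalars_injective ℚ).injOn ?_).trans
    (Finset.set_ncard_biUnion_le _ _)
  exact (Finset.finite_toSet _).biUnion fun _ _ ↦ finite_fieldsOfDegreeDiscr
    (mul_ne_zero Module.finrank_pos.ne' hℓ) _

theorem setOf_pow_eq_one_subset_one_union_biUnion (hℓ : ℓ.Prime) :
    {c : ClassGroup (𝓞 K) | c ^ ℓ = 1} ⊆
      {1} ∪ ⋃ L ∈ radicalExtensionCandidates K ℓ, {c | ∃ x : L, IsTorsionRadical K ℓ c x} := by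
  intro c hc
  obtain ⟨x, hx⟩ := exists_isTorsionRadical (L := ℂ) K hℓ.ne_zero hc
  refine (em (c = 1)).imp id fun hc_ne ↦ ?_
  exact Set.mem_biUnion (hx.adjoin_mem_radicalExtensionCandidates hℓ hc_ne)
    ⟨AdjoinSimple.gen K x, isTorsionRadical_algebraMap_iff.1 hx⟩

theorem clTor_le_one_add_pow_mul_ncard (hℓ : ℓ.Prime) :
    clTor K ℓ ≤ 1 + ℓ ^ ℓ * (radicalExtensionCandidates K ℓ).ncard := by
  have h_fin := finite_radicalExtensionCandidates (K := K) hℓ.ne_zero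
  have h_fibre : ∀ L ∈ h_fin.toFinset,
      {c : ClassGroup (𝓞 K) | ∃ x : L, IsTorsionRadical K ℓ c x}.ncard ≤ ℓ ^ ℓ := by
    intro L hL
    have h_deg := finrank_of_mem_radicalExtensionCandidates (h_fin.mem_toFinset.1 hL)
    have : FiniteDimensional K L := .of_finrank_pos (h_deg ▸ hℓ.pos)
    exact (IsTorsionRadical.ncard_le (𝓞 K) K L hℓ.ne_zero).trans_eq (by rw [h_deg])
  calc clTor K ℓ = {c : ClassGroup (𝓞 K) | c ^ ℓ = 1}.ncard := rfl
    _ ≤ ({1} ∪ ⋃ L ∈ h_fin.toFinset,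
          {c : ClassGroup (𝓞 K) | ∃ x : L, IsTorsionRadical K ℓ c x}).ncard :=
        Set.ncard_le_ncard (by simpa using setOf_pow_eq_one_subset_one_union_biUnion hℓ)
    _ ≤ 1 + ∑ L ∈ h_fin.toFinset,
          {c : ClassGroup (𝓞 K) | ∃ x : L, IsTorsionRadical K ℓ c x}.ncard := by
        grw [Set.ncard_union_le, Set.ncard_singleton, Finset.set_ncard_biUnion_le]
    _ ≤ 1 + ℓ ^ ℓ * (radicalExtensionCandidates K ℓ).ncard := by
        grw [Finset.sum_le_card_nsmul _ _ _ h_fibre, Set.ncard_eq_toFinset_card _ h_fin,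
          smul_eq_mul, mul_comm]

theorem rpow_pow_mul_le {a b e : ℝ} (ha : 1 ≤ a) (hb : 0 ≤ b) (he : 0 ≤ e) {j k : ℕ}
    (hjk : j ≤ k) : (a ^ j * b) ^ e ≤ (a ^ k) ^ e * b ^ e := by
  rw [← Real.mul_rpow (pow_nonneg (zero_le_one.trans ha) k) hb]
  gcongr

theorem ncard_radicalExtensionCandidates_le_mul_rpow (hℓ : ℓ.Prime)
    (hK : 1 < Module.finrank ℚ K) {C e : ℝ} (he : 0 ≤ e)
    (hC : ∀ D : ℕ, 1 < D →
      ((fieldsOfDegreeDiscr (Module.finrank ℚ K * ℓ) D).ncard : ℝ) ≤ C * (D : ℝ) ^ e) :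
    ((radicalExtensionCandidates K ℓ).ncard : ℝ) ≤ (Module.finrank ℚ K * ℓ + 1) *
      (C * ((ℓ : ℝ) ^ (Module.finrank ℚ K * ℓ)) ^ e) * (((discr K).natAbs : ℝ) ^ ℓ) ^ e := by
  have hC_nonneg : 0 ≤ C :=
    nonneg_of_mul_nonneg_left ((Nat.cast_nonneg _).trans (hC 2 one_lt_two)) (by positivity)
  have h_discr : 1 < (discr K).natAbs := by
    zify
    exact one_lt_two.trans (abs_discr_gt_two hK)
  have hℓ_one : (1 : ℝ) ≤ ℓ := mod_cast hℓ.one_le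
  have h_term : ∀ j ∈ Finset.range (Module.finrank ℚ K * ℓ + 1),
      ((fieldsOfDegreeDiscr (Module.finrank ℚ K * ℓ)
        (ℓ ^ j * (discr K).natAbs ^ ℓ)).ncard : ℝ) ≤
      C * (((ℓ : ℝ) ^ (Module.finrank ℚ K * ℓ)) ^ e * (((discr K).natAbs : ℝ) ^ ℓ) ^ e) := by
    intro j hj
    have h_one_lt : 1 < ℓ ^ j * (discr K).natAbs ^ ℓ :=
      one_lt_mul_of_le_of_lt (Nat.one_le_pow _ _ hℓ.pos) (Nat.one_lt_pow hℓ.ne_zero h_discr)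
    refine (hC _ h_one_lt).trans ?_
    push_cast
    gcongr
    exact rpow_pow_mul_le hℓ_one (by positivity) he (Finset.mem_range_succ_iff.1 hj)
  calc ((radicalExtensionCandidates K ℓ).ncard : ℝ)
      ≤ ∑ j ∈ Finset.range (Module.finrank ℚ K * ℓ + 1), ((fieldsOfDegreeDiscr
          (Module.finrank ℚ K * ℓ) (ℓ ^ j * (discr K).natAbs ^ ℓ)).ncard : ℝ) :=
        mod_cast ncard_radicalExtensionCandidates_le hℓ.ne_zero
    _ ≤ _ := Finset.sum_le_card_nsmul _ _ _ h_term
    _ = _ := by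
        rw [Finset.card_range, nsmul_eq_mul]
        push_cast
        ring

end NumberField

theorem clTor_le_mul_rpow (K : Type*) [Field K] [NumberField K] {ℓ : ℕ} (hℓ : ℓ.Prime)
    (hK : 1 < Module.finrank ℚ K) {C e : ℝ} (he : 0 ≤ e)
    (hC : ∀ D : ℕ, 1 < D →
      ((fieldsOfDegreeDiscr (Module.finrank ℚ K * ℓ) D).ncard : ℝ) ≤ C * (D : ℝ) ^ e) :
    (clTor K ℓ : ℝ) ≤ (1 + ℓ ^ ℓ * ((Module.finrank ℚ K * ℓ + 1) *
      (C * ((ℓ : ℝ) ^ (Module.finrank ℚ K * ℓ)) ^ e))) * (((discr K).natAbs : ℝ) ^ ℓ) ^ e := by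
  obtain ⟨φ⟩ : Nonempty (K →+* ℂ) := inferInstance
  let _ : Algebra K ℂ := φ.toAlgebra
  have h_one_le : 1 ≤ (((discr K).natAbs : ℝ) ^ ℓ) ^ e := by
    refine Real.one_le_rpow (one_le_pow₀ ?_) he
    exact_mod_cast Int.natAbs_pos.2 (discr_ne_zero K)
  calc (clTor K ℓ : ℝ) ≤ 1 + ℓ ^ ℓ * (radicalExtensionCandidates K ℓ).ncard :=
        mod_cast clTor_le_one_add_pow_mul_ncard hℓ
    _ ≤ _ := by
        grw [ncard_radicalExtensionCandidates_le_mul_rpow hℓ hK he hC]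
        linear_combination h_one_le

/-- **Discriminant multiplicity implies torsion bounds.** Fix `n ≥ 2`, a prime `ℓ`, and
`Δ ≥ 0`. If for every `ε > 0` there is a constant `C` such that for every integer `D > 1`
at most `C · D^{Δ+ε}` subfields `M ⊂ ℂ` of degree `nℓ` have `D_M = D`, then for every
`ε > 0` there is a constant `C'` such that every number field `K` of degree `n` satisfies
`|Cl_K[ℓ]| ≤ C' · D_K^{ℓΔ+ε}`. -/
theorem discriminant_multiplicity_implies_torsion_bound (n : ℕ) (hn : 2 ≤ n)
    (ℓ : ℕ) (hℓ : ℓ.Prime) (Δ : ℝ) (hΔ : 0 ≤ Δ)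
    (hDMC : ∀ ε : ℝ, 0 < ε → ∃ C : ℝ, ∀ D : ℕ, 1 < D →
      (Nat.card {M : IntermediateField ℚ ℂ //
          Module.finrank ℚ M = n * ℓ ∧ absDiscC M = D} : ℝ) ≤ C * (D : ℝ) ^ (Δ + ε)) :
    ∀ ε : ℝ, 0 < ε → ∃ C' : ℝ, ∀ (K : Type) [Field K] [NumberField K],
      Module.finrank ℚ K = n →
      (clTor K ℓ : ℝ) ≤
        C' * ((NumberField.discr K).natAbs : ℝ) ^ ((ℓ : ℝ) * Δ + ε) := by
  intro ε hε
  have hℓ_pos : (0 : ℝ) < ℓ := mod_cast hℓ.pos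
  obtain ⟨C, hC⟩ := hDMC (ε / ℓ) (by positivity)
  refine ⟨1 + ℓ ^ ℓ * ((n * ℓ + 1) * (C * ((ℓ : ℝ) ^ (n * ℓ)) ^ (Δ + ε / ℓ))), ?_⟩
  rintro K _ _ rfl
  have h_exp : (ℓ : ℝ) * Δ + ε = ℓ * (Δ + ε / ℓ) := by field_simp
  rw [h_exp, Real.rpow_mul (Nat.cast_nonneg _), Real.rpow_natCast]
  exact clTor_le_mul_rpow K hℓ hn (by positivity) hC
end
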